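/- arXiv:1206.3021 — 12 statements merged into one kernel-verified Lean document; each statement's English description precedes it below -/
import Mathlib

section
/- Let K be a commutative field and let V be a 2-dimensional K-vector space equipped with a commutative and associative K-bilinear multiplication × such that every element of V is the product of two elements of V. Then V has a multiplicative identity element, and V is isomorphic as a K-algebra to one of: a quadratic field extension of K, the ring of dual numbers K[ε]/(ε²) over K, or the direct product K × K. -/
theorem aux_unit {K V : Type} [Field K] [NonUnitalCommRing V] [Module K V]
    [IsScalarTower K V V] [SMulCommClass K V V]
    (hdim : Module.finrank K V = 2) (hprod : ∀ v : V, ∃ a b : V, v = a * b) :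
    ∃ e : V, ∀ v : V, e * v = v := by
  have : Module.Finite K V := Module.finite_of_finrank_pos (by omega)
  let B := Module.finBasisOfFinrankEq K V hdim
  have hrep : ∀ p : V, ∃ r s : K, p = r • B 0 + s • B 1 := fun p =>
    ⟨B.repr p 0, B.repr p 1, by
      conv_lhs => rw [← B.sum_repr p]
      rw [Fin.sum_univ_two]⟩
  generalize B 0 = x at hrep
  generalize B 1 = y at hrep
  have hc : ∀ v : V, ∃ a b : V, v = a * x + b * y := by
    intro v
    obtain ⟨p, q, rfl⟩ := hprod v
    obtain ⟨r, s, rfl⟩ := hrep p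
    refine ⟨r • q, s • q, ?_⟩
    rw [add_mul, smul_mul_assoc, smul_mul_assoc, smul_mul_assoc, smul_mul_assoc, mul_comm x,
      mul_comm y]
  obtain ⟨a, b, hx⟩ := hc x
  obtain ⟨c, d, hy⟩ := hc y
  have h1 : b * y = x - a * x := eq_sub_of_add_eq' hx.symm
  have h2 : c * x = y - d * y := eq_sub_of_add_eq hy.symm
  have ex : (a + d - a * d + b * c) * x = x := by
    have : b * (c * x) = x - a * x - (d * x - d * (a * x)) := by
      rw [h2, mul_sub, h1, mul_left_comm, h1, mul_sub]
    rw [add_mul, sub_mul, add_mul, mul_assoc b, this, mul_comm a d, mul_assoc]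
    abel
  have ey : (a + d - a * d + b * c) * y = y := by
    have : c * (b * y) = y - d * y - (a * y - a * (d * y)) := by
      rw [h1, mul_sub, h2, mul_left_comm, h2, mul_sub]
    rw [add_mul, sub_mul, add_mul, mul_comm b, mul_assoc c, this, mul_assoc]
    abel
  refine ⟨a + d - a * d + b * c, fun v => ?_⟩
  obtain ⟨r, s, rfl⟩ := hrep v
  rw [mul_add, mul_smul_comm, mul_smul_comm, ex, ey]

theorem aux_inv {K V W : Type} [Field K] [CommRing V] [Algebra K V] [CommRing W] [Algebra K W]
    (hV : Module.finrank K V = 2) (hW : Module.finrank K W = 2)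
    (f : W →ₗ[K] V) (hf : ∀ w, f w = 0 → w = 0) (hm : ∀ a b, f (a * b) = f a * f b) :
    ∃ φ : V ≃ₗ[K] W, ∀ a b : V, φ (a * b) = φ a * φ b := by
  have : FiniteDimensional K V := Module.finite_of_finrank_pos (by omega)
  have : FiniteDimensional K W := Module.finite_of_finrank_pos (by omega)
  let g := LinearMap.linearEquivOfInjective f
    ((injective_iff_map_eq_zero f).2 hf) (hW.trans hV.symm)
  have hg : ∀ w, g w = f w := fun _ => rfl
  refine ⟨g.symm, fun a b => ?_⟩
  apply g.injective
  rw [hg (_ * _), hm, ← hg, ← hg]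
  simp

theorem aux_class {K V : Type} [Field K] [CommRing V] [Algebra K V]
    (hdim : Module.finrank K V = 2) :
    (∀ v : V, v ≠ 0 → ∃ w : V, v * w = 1) ∨
       (∃ φ : V ≃ₗ[K] DualNumber K, ∀ a b : V, φ (a * b) = φ a * φ b) ∨
       (∃ φ : V ≃ₗ[K] (K × K), ∀ a b : V, φ (a * b) = φ a * φ b) := by
  by_cases hfield : ∀ v : V, v ≠ 0 → ∃ w : V, v * w = 1
  · exact Or.inl hfield
  right
  push Not at hfield
  obtain ⟨v, hv0, hv⟩ := hfield
  have : Nontrivial V := ⟨v, 0, hv0⟩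
  have : FiniteDimensional K V := Module.finite_of_finrank_pos (by omega)
  have hKK : Module.finrank K (K × K) = 2 := by simp
  have hD : Module.finrank K (DualNumber K) = 2 := hKK
  -- independence
  have hind : ∀ a b : K, a • (1 : V) + b • v = 0 → a = 0 ∧ b = 0 := by
    intro a b h
    have ha : a = 0 := by
      by_contra ha
      apply hv (-(a⁻¹ * b) • 1)
      have h' : b • v = -(a • (1 : V)) := eq_neg_of_add_eq_zero_right h
      rw [mul_smul_comm, mul_one, neg_smul, mul_smul, h', smul_neg, neg_neg, smul_smul,
        inv_mul_cancel₀ ha, one_smul]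
    subst ha
    simpa [hv0] using h
  let T : K × K →ₗ[K] V :=
    (LinearMap.toSpanSingleton K V 1).coprod (LinearMap.toSpanSingleton K V v)
  have hT : ∀ p, T p = p.1 • (1 : V) + p.2 • v := fun p => by simp [T]
  have hTi : Function.Injective T := by
    rw [injective_iff_map_eq_zero]
    intro p hp
    rw [hT] at hp
    exact Prod.ext (hind _ _ hp).1 (hind _ _ hp).2
  obtain ⟨⟨t, s⟩, hts⟩ :=
    (LinearMap.injective_iff_surjective_of_finrank_eq_finrank (hKK.trans hdim.symm)).1 hTi (v * v)
  rw [hT] at hts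
  simp only at hts
  have ht : t = 0 := by
    by_contra ht
    apply hv (t⁻¹ • (v - s • 1))
    rw [mul_smul_comm, mul_sub, ← hts, mul_smul_comm, mul_one, add_sub_cancel_right, smul_smul,
      inv_mul_cancel₀ ht, one_smul]
  subst ht
  rw [zero_smul, zero_add] at hts
  by_cases hs : s = 0
  · left
    subst hs
    rw [zero_smul] at hts
    let D : DualNumber K →ₗ[K] V :=
      { toFun := fun d => TrivSqZeroExt.fst d • (1 : V) + TrivSqZeroExt.snd d • v
        map_add' := fun a b => by
          rw [TrivSqZeroExt.fst_add, TrivSqZeroExt.snd_add, add_smul, add_smul]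
          abel
        map_smul' := fun r a => by
          rw [TrivSqZeroExt.fst_smul, TrivSqZeroExt.snd_smul, smul_assoc, smul_assoc,
            RingHom.id_apply, smul_add] }
    have e : ∀ d, D d = TrivSqZeroExt.fst d • (1 : V) + TrivSqZeroExt.snd d • v := fun _ => rfl
    refine aux_inv hdim hD (f := D) ?_ ?_
    · intro w hw
      rw [e] at hw
      exact TrivSqZeroExt.ext (hind _ _ hw).1 (hind _ _ hw).2
    · intro a b
      rw [e, e, e, TrivSqZeroExt.fst_mul, TrivSqZeroExt.snd_mul]
      simp only [Algebra.smul_def, smul_eq_mul, MulOpposite.smul_eq_mul_unop,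
        MulOpposite.unop_op, map_add, map_mul]
      linear_combination
        (algebraMap K V (TrivSqZeroExt.snd a)) * (algebraMap K V (TrivSqZeroExt.snd b)) * hts
  · right
    let f : V := s⁻¹ • v
    have hff : f * f = f := by
      simp only [f]
      rw [smul_mul_smul_comm, ← hts, smul_smul, mul_assoc, inv_mul_cancel₀ hs, mul_one]
    let S : K × K →ₗ[K] V :=
      (LinearMap.toSpanSingleton K V f).coprod (LinearMap.toSpanSingleton K V (1 - f))
    have hS : ∀ p, S p = p.1 • f + p.2 • (1 - f) := fun p => by simp [S]
    refine aux_inv hdim hKK (f := S) ?_ ?_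
    · rintro ⟨a, b⟩ h
      rw [hS] at h
      have h' : b • (1 : V) + ((a - b) * s⁻¹) • v = 0 := by
        rw [← h, mul_smul, sub_smul, smul_sub]
        simp only [f]
        abel
      obtain ⟨hb, hab⟩ := hind _ _ h'
      have : a - b = 0 := (mul_eq_zero.1 hab).resolve_right (inv_ne_zero hs)
      have ha : a = 0 := by rw [← this, hb, sub_zero]
      rw [ha, hb]; rfl
    · rintro ⟨a, b⟩ ⟨c, d⟩
      rw [hS, hS, hS]
      simp only [Prod.mk_mul_mk, Algebra.smul_def, map_mul]
      linear_combination (-(algebraMap K V a - algebraMap K V b)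
        * (algebraMap K V c - algebraMap K V d)) * hff


/-- Let `K` be a commutative field and `V` a 2-dimensional `K`-vector space
with a commutative, associative, `K`-bilinear multiplication `mul` such that every element of
`V` is a product of two elements.  Then `V` has a multiplicative identity and, with this
multiplication, `V` is isomorphic as a `K`-algebra to a quadratic field extension of `K`
(equivalently, `(V, mul)` is itself a field), to the dual numbers `K[ε]/(ε²)`, or to `K × K`. -/
theorem stmt0 (K : Type) [Field K] (V : Type) [AddCommGroup V] [Module K V]
    (mul : V → V → V)
    (hcomm : ∀ a b : V, mul a b = mul b a)
    (hassoc : ∀ a b c : V, mul (mul a b) c = mul a (mul b c))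
    (hbilin : ∀ (r : K) (u v w : V), mul (r • v + w) u = r • mul v u + mul w u)
    (hdim : Module.finrank K V = 2)
    (hprod : ∀ v : V, ∃ a b : V, v = mul a b) :
    ∃ e : V, (∀ v : V, mul e v = v) ∧
      ((∀ v : V, v ≠ 0 → ∃ w : V, mul v w = e) ∨
       (∃ φ : V ≃ₗ[K] DualNumber K, ∀ a b : V, φ (mul a b) = φ a * φ b) ∨
       (∃ φ : V ≃ₗ[K] (K × K), ∀ a b : V, φ (mul a b) = φ a * φ b)) := by
  have hadd : ∀ a b c : V, mul (a + b) c = mul a c + mul b c := fun a b c => by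
    simpa using hbilin 1 c a b
  have hzero : ∀ c : V, mul 0 c = 0 := fun c => by
    simpa using hadd 0 0 c
  have hsmul : ∀ (r : K) (a c : V), mul (r • a) c = r • mul a c := fun r a c => by
    simpa [hzero] using hbilin r c a 0
  have hunit : ∃ e : V, ∀ v : V, mul e v = v := by
    letI : NonUnitalCommRing V :=
      { (inferInstance : AddCommGroup V) with
        mul := mul
        mul_assoc := hassoc
        mul_comm := hcomm
        left_distrib := fun a b c => by
          change mul a (b + c) = mul a b + mul a c
          rw [hcomm, hadd, hcomm b, hcomm c]
        right_distrib := hadd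
        zero_mul := hzero
        mul_zero := fun a => (hcomm a 0).trans (hzero a) }
    haveI : IsScalarTower K V V := ⟨fun r a b => hsmul r a b⟩
    haveI : SMulCommClass K V V := ⟨fun r a b => by
      change r • mul a b = mul a (r • b)
      rw [hcomm a (r • b), hsmul, hcomm]⟩
    exact aux_unit (K := K) hdim hprod
  obtain ⟨e, he⟩ := hunit
  refine ⟨e, he, ?_⟩
  letI : CommRing V :=
    { (inferInstance : AddCommGroup V) with
      mul := mul
      mul_assoc := hassoc
      mul_comm := hcomm
      left_distrib := fun a b c => by
        change mul a (b + c) = mul a b + mul a c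
        rw [hcomm, hadd, hcomm b, hcomm c]
      right_distrib := hadd
      zero_mul := hzero
      mul_zero := fun a => (hcomm a 0).trans (hzero a)
      one := e
      one_mul := he
      mul_one := fun a => (hcomm a e).trans (he a) }
  letI : Algebra K V := Algebra.ofModule (fun r a b => hsmul r a b) (fun r a b => by
    change mul a (r • b) = r • mul a b
    rw [hcomm a (r • b), hsmul, hcomm])
  exact aux_class (K := K) hdim
end

section
/- Let K be a commutative field and let V be a 2-dimensional K-vector space equipped with a commutative and associative K-bilinear multiplication × such that every element of V is the product of two elements of V, and let 1 denote its multiplicative identity (which exists). Then there exists a unique K-linear bijection σ : V → V with σ ∘ σ = id and σ(1) = 1 such that for every v ∈ V both v + σ(v) and v × σ(v) lie in K·1. -/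
/-- Let `K` be a commutative field and `V` a 2-dimensional `K`-vector space
with a commutative, associative, `K`-bilinear multiplication `mul` such that every element of
`V` is a product of two elements, and let `e` be its multiplicative identity.  Then there is a
unique `K`-linear bijection `σ : V → V` with `σ ∘ σ = id` and `σ e = e` such that for every
`v ∈ V` both `v + σ v` and `v × σ v` lie in `K·e`. -/
theorem stmt1 (K : Type) [Field K] (V : Type) [AddCommGroup V] [Module K V]
    (mul : V → V → V)
    (hcomm : ∀ a b : V, mul a b = mul b a)
    (hassoc : ∀ a b c : V, mul (mul a b) c = mul a (mul b c))
    (hbilin : ∀ (r : K) (u v w : V), mul (r • v + w) u = r • mul v u + mul w u)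
    (hdim : Module.finrank K V = 2)
    (hprod : ∀ v : V, ∃ a b : V, v = mul a b)
    (e : V) (he : ∀ v : V, mul e v = v) :
    ∃! σ : V ≃ₗ[K] V, (∀ v : V, σ (σ v) = v) ∧ σ e = e ∧
      ∀ v : V, (∃ k : K, v + σ v = k • e) ∧ (∃ k : K, mul v (σ v) = k • e) := by
  have hadd : ∀ v w u : V, mul (v + w) u = mul v u + mul w u := by
    intro v w u
    have := hbilin 1 u v w
    simpa using this
  have hzero : ∀ u : V, mul 0 u = 0 := by
    intro u
    have := hadd 0 0 u
    simpa using this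
  have hsmul : ∀ (r : K) (v u : V), mul (r • v) u = r • mul v u := by
    intro r v u
    have := hbilin r u v 0
    simpa [hzero] using this
  have hadd' : ∀ u v w : V, mul u (v + w) = mul u v + mul u w := by
    intro u v w
    rw [hcomm, hadd, hcomm v, hcomm w]
  have hsmul' : ∀ (r : K) (u v : V), mul u (r • v) = r • mul u v := by
    intro r u v
    rw [hcomm, hsmul, hcomm v]
  have he' : ∀ v : V, mul v e = v := fun v => by rw [hcomm, he]
  have he0 : e ≠ 0 := by
    intro h
    have h0 : ∀ v : V, v = 0 := fun v => by rw [← he v, h, hzero]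
    haveI : Subsingleton V := ⟨fun a b => by rw [h0 a, h0 b]⟩
    rw [Module.finrank_zero_of_subsingleton] at hdim
    omega
  obtain ⟨x, hx⟩ := exists_linearIndependent_pair_of_one_lt_finrank (R := K) (by omega) he0
  let b := basisOfLinearIndependentOfCardEqFinrank hx (by simp [hdim])
  have hb0 : b 0 = e := by simp [b]
  have hb1 : b 1 = x := by simp [b]
  have hrep : ∀ v : V, v = b.coord 0 v • e + b.coord 1 v • x := by
    intro v
    have := b.sum_repr v
    rw [Fin.sum_univ_two, hb0, hb1] at this
    exact this.symm
  have c0e : b.coord 0 e = 1 := by rw [← hb0]; simp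
  have c1e : b.coord 1 e = 0 := by rw [← hb0]; simp
  have c0x : b.coord 0 x = 0 := by rw [← hb1]; simp
  have c1x : b.coord 1 x = 1 := by rw [← hb1]; simp
  obtain ⟨n, t, hxx⟩ : ∃ n t : K, mul x x = n • e + t • x := ⟨_, _, hrep _⟩
  let tr : V →ₗ[K] K := (2 : K) • b.coord 0 + t • b.coord 1
  have htre : tr e = 2 := by
    simp only [tr, LinearMap.add_apply, LinearMap.smul_apply, c0e, c1e]; simp
  have htrx : tr x = t := by
    simp only [tr, LinearMap.add_apply, LinearMap.smul_apply, c0x, c1x]; simp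
  let s : V →ₗ[K] V := tr.smulRight e - LinearMap.id
  have hs : ∀ v, s v = tr v • e - v := fun v => by simp [s]
  have hss : ∀ v, s (s v) = v := by
    intro v
    rw [hs (s v), hs v, map_sub, map_smul, htre]
    simp only [smul_eq_mul]
    module
  refine ⟨LinearEquiv.ofInvolutive s hss, ⟨hss, ?_, ?_⟩, ?_⟩
  · change s e = e
    rw [hs, htre]; module
  · intro v
    change (∃ k : K, v + s v = k • e) ∧ (∃ k : K, mul v (s v) = k • e)
    refine ⟨⟨tr v, by rw [hs]; module⟩, ?_⟩
    obtain ⟨p, q, hv⟩ : ∃ p q : K, v = p • e + q • x := ⟨_, _, hrep v⟩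
    have h1 : s v = (p + q * t) • e + (-q) • x := by
      rw [hs, hv, map_add, map_smul, map_smul, htre, htrx]
      simp only [smul_eq_mul]
      module
    refine ⟨p * (p + q * t) - q * q * n, ?_⟩
    rw [h1, hv]
    simp only [hadd, hadd', hsmul, hsmul', he, he', hxx]
    module
  · rintro τ ⟨-, hτe, hτ⟩
    have key : τ x = s x := by
      obtain ⟨⟨k, hk⟩, m, hm⟩ := hτ x
      have h1 : τ x = k • e + (-1 : K) • x := by
        rw [← hk]; module
      rw [h1, hadd', hsmul', hsmul', he', hxx] at hm
      have h2 := congrArg (b.coord 1) hm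
      simp only [map_add, map_smul, c1e, c1x, smul_eq_mul] at h2
      have h3 : k = t := by linear_combination h2
      rw [h1, hs, htrx, h3]; module
    have keye : τ e = s e := by
      rw [hτe, hs, htre]; module
    ext v
    change τ v = s v
    rw [hrep v, map_add, map_add, map_smul, map_smul, map_smul, map_smul, key, keye]
end

section
/- Let L₁ = V*[a₁,b₁,c₁] and L₂ = V*[a₂,b₂,c₂] be two lines of 𝒢(V), and set A = b₁c₂ − b₂c₁, B = c₁a₂ − c₂a₁, C = a₁b₂ − a₂b₁. Then L₁ and L₂ are not neighboring if and only if the triple (A,B,C) has trivial annihilator in V (i.e., V*(A,B,C) is a point of 𝒢(V)). -/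
/-! Context: `K` a field, `V` a commutative, associative, unital 2-dimensional `K`-algebra in
which every element is a product of two elements; `V₀ = K·r ∪ K·s` is the set of non-units.
Points and lines of the geometry `𝒢(V)` are represented by triples in `V × V × V` with
trivial annihilator, up to multiplication by a unit. -/

/-- The triple `p` has trivial annihilator (so `V*p` is a point/line of `𝒢(V)`). -/
def TrivAnn {V : Type} [CommRing V] (p : V × V × V) : Prop :=
  ∀ v : V, v * p.1 = 0 → v * p.2.1 = 0 → v * p.2.2 = 0 → v = 0

/-- The point (represented by) `p` is incident with the line (represented by) `L`. -/
def Incid {V : Type} [CommRing V] (p L : V × V × V) : Prop :=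
  L.1 * p.1 + L.2.1 * p.2.1 + L.2.2 * p.2.2 = 0

/-- Two points (or two lines) are neighboring. -/
def Nbr {V : Type} [CommRing V] (p q : V × V × V) : Prop :=
  ∃ k l : V, (k, l) ≠ ((0 : V), (0 : V)) ∧
    (k * p.1, k * p.2.1, k * p.2.2) = (l * q.1, l * q.2.1, l * q.2.2)

/-- The point `p` and the line `L` are neighboring. -/
def NbrPL {V : Type} [CommRing V] (p L : V × V × V) : Prop :=
  ¬ IsUnit (L.1 * p.1 + L.2.1 * p.2.1 + L.2.2 * p.2.2)

/-- `p` and `q` represent the same point (resp. line) of `𝒢(V)`. -/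
def SameCls {V : Type} [CommRing V] (p q : V × V × V) : Prop :=
  ∃ u : V, IsUnit u ∧ (u * p.1, u * p.2.1, u * p.2.2) = q

/-- The standing hypotheses on the algebra `V` over `K`: it is `2`-dimensional, every element
is a product of two elements, and the set of non-units is `K·r ∪ K·s`. -/
def GoodAlg (K : Type) [Field K] (V : Type) [CommRing V] [Algebra K V] (r s : V) : Prop :=
  Module.finrank K V = 2 ∧ (∀ v : V, ∃ a b : V, v = a * b) ∧
    (∀ v : V, ¬ IsUnit v ↔ ((∃ k : K, v = k • r) ∨ (∃ k : K, v = k • s)))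

/-- Two lines `L₁ = V*[a₁,b₁,c₁]`, `L₂ = V*[a₂,b₂,c₂]` of `𝒢(V)` are
non-neighboring iff the triple `(A,B,C)` of 2×2 minors has trivial annihilator,
i.e. `V*(A,B,C)` is a point of `𝒢(V)`. -/
theorem stmt2 (K : Type) [Field K] (V : Type) [CommRing V] [Algebra K V] (r s : V)
    (hV : GoodAlg K V r s)
    (a₁ b₁ c₁ a₂ b₂ c₂ : V)
    (hL₁ : TrivAnn (a₁, b₁, c₁)) (hL₂ : TrivAnn (a₂, b₂, c₂)) :
    ¬ Nbr (a₁, b₁, c₁) (a₂, b₂, c₂) ↔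
      TrivAnn (b₁ * c₂ - b₂ * c₁, c₁ * a₂ - c₂ * a₁, a₁ * b₂ - a₂ * b₁) := by
  constructor
  · intro hN v hA hB hC
    simp only at hA hB hC
    have key : ∀ k l : V, k * a₁ = l * a₂ → k * b₁ = l * b₂ → k * c₁ = l * c₂ → l = 0 := by
      intro k l h1 h2 h3
      by_contra hl
      exact hN ⟨k, l, fun h => hl (Prod.ext_iff.mp h).2, by simp only [h1, h2, h3]⟩
    refine hL₁ v ?_ ?_ ?_
    · refine key (v * a₂) (v * a₁) ?_ ?_ ?_
      · ring
      · linear_combination -hC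
      · linear_combination hB
    · refine key (v * b₂) (v * b₁) ?_ ?_ ?_
      · linear_combination hC
      · ring
      · linear_combination -hA
    · refine key (v * c₂) (v * c₁) ?_ ?_ ?_
      · linear_combination -hB
      · linear_combination hA
      · ring
  · rintro hT ⟨k, l, hne, he⟩
    simp only [Prod.mk.injEq] at he
    obtain ⟨h1, h2, h3⟩ := he
    apply hne
    have hk : k = 0 := by
      refine hT k ?_ ?_ ?_ <;> simp only
      · linear_combination c₂ * h2 - b₂ * h3
      · linear_combination a₂ * h3 - c₂ * h1
      · linear_combination b₂ * h1 - a₂ * h2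
    have hl : l = 0 := by
      refine hT l ?_ ?_ ?_ <;> simp only
      · linear_combination c₁ * h2 - b₁ * h3
      · linear_combination a₁ * h3 - c₁ * h1
      · linear_combination b₁ * h1 - a₁ * h2
    rw [hk, hl]
end

section
/- Let L₁ = V*[a₁,b₁,c₁] and L₂ = V*[a₂,b₂,c₂] be two non-neighboring lines of 𝒢(V), and set A = b₁c₂ − b₂c₁, B = c₁a₂ − c₂a₁, C = a₁b₂ − a₂b₁. Then a triple (A',B',C') ∈ V³ satisfies A'a₁ + B'b₁ + C'c₁ = 0 and A'a₂ + B'b₂ + C'c₂ = 0 if and only if (A',B',C') = m·(A,B,C) for some m ∈ V. -/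
theorem ann_of_proper {V : Type} [CommRing V] [IsArtinianRing V] (I : Ideal V) (hI : I ≠ ⊤) :
    ∃ v : V, v ≠ 0 ∧ ∀ x ∈ I, v * x = 0 := by
  obtain ⟨M, hM, hIM⟩ := Ideal.exists_le_maximal I hI
  have hp : M.IsPrime := hM.isPrime
  have h1 : M ∈ minimalPrimes V := Ideal.mem_minimalPrimes_of_krullDimLE_zero M
  have h2 : M ∈ (Module.annihilator V V).minimalPrimes := by
    have h0 : Module.annihilator V V = ⊥ := by
      rw [eq_bot_iff]
      intro x hx
      have := (Module.mem_annihilator.mp hx) 1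
      simpa using this
    rw [h0]
    exact h1
  have h3 := Module.associatedPrimes.minimalPrimes_annihilator_subset_associatedPrimes V V h2
  obtain ⟨-, x, hx⟩ := isAssociatedPrime_iff.mp h3
  refine ⟨x, ?_, ?_⟩
  · rintro rfl
    apply hp.ne_top
    rw [hx]
    simp
  · intro y hy
    have hyM := hIM hy
    rw [hx, Submodule.mem_colon_singleton, Submodule.mem_bot, smul_eq_mul] at hyM
    rw [mul_comm]
    exact hyM

/-- For two non-neighboring lines `L₁ = V*[a₁,b₁,c₁]`, `L₂ = V*[a₂,b₂,c₂]`
and `(A,B,C)` the triple of 2×2 minors, a triple `(A',B',C')` satisfies both incidence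
equations iff it is a `V`-multiple of `(A,B,C)`. -/
theorem stmt3 (K : Type) [Field K] (V : Type) [CommRing V] [Algebra K V] (r s : V)
    (hV : GoodAlg K V r s)
    (a₁ b₁ c₁ a₂ b₂ c₂ : V)
    (hL₁ : TrivAnn (a₁, b₁, c₁)) (hL₂ : TrivAnn (a₂, b₂, c₂))
    (hnn : ¬ Nbr (a₁, b₁, c₁) (a₂, b₂, c₂))
    (A' B' C' : V) :
    (A' * a₁ + B' * b₁ + C' * c₁ = 0 ∧ A' * a₂ + B' * b₂ + C' * c₂ = 0) ↔
      ∃ m : V, A' = m * (b₁ * c₂ - b₂ * c₁) ∧ B' = m * (c₁ * a₂ - c₂ * a₁) ∧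
        C' = m * (a₁ * b₂ - a₂ * b₁) := by
  constructor
  · rintro ⟨h1, h2⟩
    have hfin : Module.Finite K V := Module.finite_of_finrank_pos (by rw [hV.1]; norm_num)
    have hart : IsArtinianRing V := isArtinian_of_tower K inferInstance
    have htop : Ideal.span {b₁ * c₂ - b₂ * c₁, c₁ * a₂ - c₂ * a₁, a₁ * b₂ - a₂ * b₁}
        = (⊤ : Ideal V) := by
      by_contra hne
      obtain ⟨v, hv, hk⟩ := ann_of_proper _ hne
      have hA := hk _ (Ideal.subset_span (by simp : b₁ * c₂ - b₂ * c₁ ∈ _))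
      have hB := hk _ (Ideal.subset_span (by simp : c₁ * a₂ - c₂ * a₁ ∈ _))
      have hC := hk _ (Ideal.subset_span (by simp : a₁ * b₂ - a₂ * b₁ ∈ _))
      have key : ∀ k l : V, k * a₁ = l * a₂ → k * b₁ = l * b₂ → k * c₁ = l * c₂ → l = 0 := by
        intro k l e1 e2 e3
        by_contra hl
        exact hnn ⟨k, l, fun h => hl (Prod.ext_iff.mp h).2, by simp only [e1, e2, e3]⟩
      refine hv (hL₁ v ?_ ?_ ?_)
      · exact key (v * a₂) (v * a₁) (by ring) (by linear_combination -hC)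
          (by linear_combination hB)
      · exact key (v * b₂) (v * b₁) (by linear_combination hC) (by ring)
          (by linear_combination -hA)
      · exact key (v * c₂) (v * c₁) (by linear_combination -hB)
          (by linear_combination hA) (by ring)
    have hone : (1 : V) ∈ Ideal.span {b₁ * c₂ - b₂ * c₁, c₁ * a₂ - c₂ * a₁, a₁ * b₂ - a₂ * b₁} := by
      rw [htop]; trivial
    obtain ⟨x, y, z, h⟩ := Submodule.mem_span_triple.mp hone
    simp only [smul_eq_mul] at h
    refine ⟨x * A' + y * B' + z * C', ?_, ?_, ?_⟩
    · linear_combination (-A') * h + y * (c₁ * h2 - c₂ * h1) - z * (b₁ * h2 - b₂ * h1)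
    · linear_combination (-B') * h - x * (c₁ * h2 - c₂ * h1) + z * (a₁ * h2 - a₂ * h1)
    · linear_combination (-C') * h + x * (b₁ * h2 - b₂ * h1) - y * (a₁ * h2 - a₂ * h1)
  · rintro ⟨m, rfl, rfl, rfl⟩
    constructor <;> ring
end

section
/- Let L₁ = V*[a₁,b₁,c₁] and L₂ = V*[a₂,b₂,c₂] be two non-neighboring lines of 𝒢(V), and set A = b₁c₂ − b₂c₁, B = c₁a₂ − c₂a₁, C = a₁b₂ − a₂b₁. Then L₁ and L₂ have exactly one common point, namely V*(A,B,C). Moreover, if a point of L₁ is neighboring the line L₂, then it is neighboring the point V*(A,B,C). -/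
/-- In a finite-dimensional commutative algebra over a field a non-unit is a zero divisor. -/
theorem exists_killer (K : Type) [Field K] (V : Type) [CommRing V] [Algebra K V]
    (hV : Module.finrank K V = 2) (e : V) (he : ¬ IsUnit e) : ∃ t : V, t ≠ 0 ∧ t * e = 0 := by
  haveI : FiniteDimensional K V := Module.finite_of_finrank_pos (by omega)
  haveI : IsArtinianRing V := IsArtinianRing.of_finite K V
  by_contra hc
  push Not at hc
  apply he
  apply IsArtinianRing.isUnit_of_mem_nonZeroDivisors
  rw [mem_nonZeroDivisors_iff_right]
  intro x hx
  by_contra hx0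
  exact hc x hx0 hx

/-- A triple with trivial annihilator is unimodular. -/
theorem unimod (K : Type) [Field K] (V : Type) [CommRing V] [Algebra K V]
    (hV : Module.finrank K V = 2) (x y z : V) (hp : TrivAnn (x, y, z)) :
    ∃ a b c : V, a * x + b * y + c * z = 1 := by
  haveI : FiniteDimensional K V := Module.finite_of_finrank_pos (by omega)
  haveI : Nontrivial V := Module.nontrivial_of_finrank_pos (R := K) (by omega)
  by_contra hc
  push Not at hc
  let I : Ideal V := Ideal.span {x, y, z}
  have hI : (1 : V) ∉ I := by
    intro h
    obtain ⟨a, b, c, h⟩ := Submodule.mem_span_triple.1 h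
    exact hc a b c (by simpa using h)
  have key : ∀ w ∈ I, w ≠ 0 → False := by
    intro w hw hw0
    have hwu : ¬ IsUnit w := fun h => hI ((Ideal.eq_top_of_isUnit_mem I hw h) ▸ Submodule.mem_top)
    obtain ⟨t, ht0, ht⟩ := exists_killer K V hV w hwu
    let J : Submodule K V := I.restrictScalars K
    have hJ : Module.finrank K J < 2 := by
      rw [← hV]
      apply Submodule.finrank_lt
      intro h
      exact hI (show (1 : V) ∈ J by rw [h]; trivial)
    have hw' : (⟨w, hw⟩ : J) ≠ 0 := fun h => hw0 (congrArg Subtype.val h)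
    have hJ1 : Module.finrank K J = 1 := by
      haveI : Nontrivial J := ⟨⟨_, _, hw'⟩⟩
      have := Module.finrank_pos (R := K) (M := J)
      omega
    have all : ∀ v ∈ I, t * v = 0 := by
      intro v hv
      obtain ⟨c, hcv⟩ := (finrank_eq_one_iff_of_nonzero' (⟨w, hw⟩ : J) hw').1 hJ1 ⟨v, hv⟩
      have h2 : c • w = v := congrArg Subtype.val hcv
      rw [← h2, mul_smul_comm, ht, smul_zero]
    exact ht0 (hp t (all _ (Ideal.subset_span (by simp))) (all _ (Ideal.subset_span (by simp)))
      (all _ (Ideal.subset_span (by simp))))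
  have hx : x = 0 := by_contra fun h => key x (Ideal.subset_span (by simp)) h
  have hy : y = 0 := by_contra fun h => key y (Ideal.subset_span (by simp)) h
  have hz : z = 0 := by_contra fun h => key z (Ideal.subset_span (by simp)) h
  exact one_ne_zero (hp 1 (by simp [hx]) (by simp [hy]) (by simp [hz]))

/-- If a nonzero `t` kills all 2×2 minors, the triples are neighboring. -/
theorem nbr_of_killer (V : Type) [CommRing V] (x y z u v w t : V) (hp : TrivAnn (x, y, z))
    (ht : t ≠ 0) (h1 : t * (y * w - v * z) = 0) (h2 : t * (z * u - w * x) = 0)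
    (h3 : t * (x * v - u * y) = 0) : Nbr (x, y, z) (u, v, w) := by
  by_cases hx : t * x = 0
  · by_cases hy : t * y = 0
    · have hz : t * z ≠ 0 := fun hz => ht (hp t hx hy hz)
      refine ⟨t * w, t * z, fun h => hz (Prod.ext_iff.1 h).2, ?_⟩
      simp only [Prod.mk.injEq]
      refine ⟨by linear_combination -h2, by linear_combination h1, by ring⟩
    · refine ⟨t * v, t * y, fun h => hy (Prod.ext_iff.1 h).2, ?_⟩
      simp only [Prod.mk.injEq]
      refine ⟨by linear_combination h3, by ring, by linear_combination -h1⟩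
  · refine ⟨t * u, t * x, fun h => hx (Prod.ext_iff.1 h).2, ?_⟩
    simp only [Prod.mk.injEq]
    refine ⟨by ring, by linear_combination -h3, by linear_combination h2⟩

/-- Two non-neighboring lines `L₁`, `L₂` have exactly one common point,
namely `V*(A,B,C)` where `(A,B,C)` is the triple of 2×2 minors; moreover any point of `L₁`
neighboring the line `L₂` neighbors the point `V*(A,B,C)`. -/
theorem stmt4 (K : Type) [Field K] (V : Type) [CommRing V] [Algebra K V] (r s : V)
    (hV : GoodAlg K V r s)
    (a₁ b₁ c₁ a₂ b₂ c₂ : V)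
    (hL₁ : TrivAnn (a₁, b₁, c₁)) (hL₂ : TrivAnn (a₂, b₂, c₂))
    (hnn : ¬ Nbr (a₁, b₁, c₁) (a₂, b₂, c₂)) :
    TrivAnn (b₁ * c₂ - b₂ * c₁, c₁ * a₂ - c₂ * a₁, a₁ * b₂ - a₂ * b₁) ∧
    Incid (b₁ * c₂ - b₂ * c₁, c₁ * a₂ - c₂ * a₁, a₁ * b₂ - a₂ * b₁) (a₁, b₁, c₁) ∧
    Incid (b₁ * c₂ - b₂ * c₁, c₁ * a₂ - c₂ * a₁, a₁ * b₂ - a₂ * b₁) (a₂, b₂, c₂) ∧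
    (∀ p : V × V × V, TrivAnn p → Incid p (a₁, b₁, c₁) → Incid p (a₂, b₂, c₂) →
      SameCls p (b₁ * c₂ - b₂ * c₁, c₁ * a₂ - c₂ * a₁, a₁ * b₂ - a₂ * b₁)) ∧
    (∀ p : V × V × V, TrivAnn p → Incid p (a₁, b₁, c₁) → NbrPL p (a₂, b₂, c₂) →
      Nbr p (b₁ * c₂ - b₂ * c₁, c₁ * a₂ - c₂ * a₁, a₁ * b₂ - a₂ * b₁)) := by
  have hd := hV.1
  have hq : TrivAnn (b₁ * c₂ - b₂ * c₁, c₁ * a₂ - c₂ * a₁, a₁ * b₂ - a₂ * b₁) := by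
    intro t h1 h2 h3
    by_contra ht
    exact hnn (nbr_of_killer V _ _ _ _ _ _ t hL₁ ht h1 h2 h3)
  refine ⟨hq, by simp only [Incid]; ring, by simp only [Incid]; ring, ?_, ?_⟩
  · rintro ⟨x, y, z⟩ hp h1 h2
    obtain ⟨a, b, c, hα⟩ := unimod K V hd _ _ _ hp
    obtain ⟨a', b', c', hβ⟩ := unimod K V hd _ _ _ hq
    simp only [Incid] at h1 h2
    have e1 : y * (a₁ * b₂ - a₂ * b₁) - (c₁ * a₂ - c₂ * a₁) * z = 0 := by
      linear_combination a₁ * h2 - a₂ * h1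
    have e2 : z * (b₁ * c₂ - b₂ * c₁) - (a₁ * b₂ - a₂ * b₁) * x = 0 := by
      linear_combination b₁ * h2 - b₂ * h1
    have e3 : x * (c₁ * a₂ - c₂ * a₁) - (b₁ * c₂ - b₂ * c₁) * y = 0 := by
      linear_combination c₁ * h2 - c₂ * h1
    generalize b₁ * c₂ - b₂ * c₁ = A at *
    generalize c₁ * a₂ - c₂ * a₁ = B at *
    generalize a₁ * b₂ - a₂ * b₁ = C at *
    have u1 : (a * A + b * B + c * C) * x = A := by linear_combination A * hα + b * e3 - c * e2
    have u2 : (a * A + b * B + c * C) * y = B := by linear_combination B * hα - a * e3 + c * e1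
    have u3 : (a * A + b * B + c * C) * z = C := by linear_combination C * hα + a * e2 - b * e1
    refine ⟨a * A + b * B + c * C, ?_, by simp only [u1, u2, u3]⟩
    apply IsUnit.of_mul_eq_one (a' * x + b' * y + c' * z)
    linear_combination hβ + a' * u1 + b' * u2 + c' * u3
  · rintro ⟨x, y, z⟩ hp h1 h2
    obtain ⟨t, ht0, ht⟩ := exists_killer K V hd _ h2
    simp only [Incid] at h1 ht
    apply nbr_of_killer V _ _ _ _ _ _ t hp ht0
    · linear_combination a₁ * ht - t * a₂ * h1
    · linear_combination b₁ * ht - t * b₂ * h1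
    · linear_combination c₁ * ht - t * c₂ * h1
end

section
/- For every point P and every line L of 𝒢(V), there exists a point incident with L that is not neighboring P. (In particular, no point neighbors all points of a line.) -/
theorem field_step {F : Type*} [Field F] (x y z a b c : F)
    (hP : ¬ (x = 0 ∧ y = 0 ∧ z = 0)) (hL : ¬ (a = 0 ∧ b = 0 ∧ c = 0)) :
    ∃ u v w : F, ¬ (y * (a * v - b * u) - z * (c * u - a * w) = 0 ∧
      z * (b * w - c * v) - x * (a * v - b * u) = 0 ∧
      x * (c * u - a * w) - y * (b * w - c * v) = 0) := by
  by_contra! h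
  have h1 := h 1 0 0
  have h2 := h 0 1 0
  have h3 := h 0 0 1
  simp at h1 h2 h3
  grind

theorem max_step {V : Type} [CommRing V] [IsArtinianRing V] (p : V × V × V) (hp : TrivAnn p)
    (m : Ideal V) [hm : m.IsMaximal] : ¬ (p.1 ∈ m ∧ p.2.1 ∈ m ∧ p.2.2 ∈ m) := by
  rintro ⟨h1, h2, h3⟩
  have hass : m ∈ associatedPrimes V V := by
    have : IsFractionRing V V := IsFractionRing.self_iff_nonZeroDivisors_le_isUnit.mpr (
      fun t ht => IsArtinianRing.isUnit_of_mem_nonZeroDivisors ht)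
    exact Ideal.IsMaximal.mem_associatedPrimes_of_isFractionRing V m
  obtain ⟨hpr, x, hx⟩ := isAssociatedPrime_iff.mp hass
  have key : ∀ y ∈ m, x * y = 0 := by
    intro y hy
    rw [hx] at hy
    simpa [Submodule.mem_colon_singleton, mul_comm] using hy
  have hx0 := hp x (key _ h1) (key _ h2) (key _ h3)
  apply hm.ne_top
  rw [hx, hx0, Ideal.eq_top_iff_one]
  simp [Submodule.mem_colon_singleton]

/-- An ideal-theoretic converse: three elements not in a common maximal ideal have
trivial annihilator. -/
theorem ann_step {V : Type} [CommRing V] (d e f : V)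
    (h : ∀ m : Ideal V, m.IsMaximal → ¬ (d ∈ m ∧ e ∈ m ∧ f ∈ m)) (k : V)
    (h1 : k * d = 0) (h2 : k * e = 0) (h3 : k * f = 0) : k = 0 := by
  by_contra hk
  let I : Ideal V := Ideal.span {k}
  have hI : Module.annihilator V I ≠ ⊤ := by
    intro ht
    have := (Ideal.eq_top_iff_one _).mp ht
    rw [Submodule.mem_annihilator] at this
    exact hk (by simpa using this k (Ideal.mem_span_singleton_self k))
  obtain ⟨m, hm, hle⟩ := Ideal.exists_le_maximal _ hI
  have key : ∀ y, k * y = 0 → y ∈ m := by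
    intro y hy
    apply hle
    rw [Submodule.mem_annihilator]
    intro n hn
    obtain ⟨t, rfl⟩ := Ideal.mem_span_singleton'.mp hn
    simp only [smul_eq_mul]
    linear_combination t * hy
  exact h m hm ⟨key _ h1, key _ h2, key _ h3⟩

/-- For every point `P` and every line `L` of `𝒢(V)` there is a point
incident with `L` which does not neighbor `P`; in particular no point neighbors all the
points of a line. -/
theorem stmt5 (K : Type) [Field K] (V : Type) [CommRing V] [Algebra K V] (r s : V)
    (hV : GoodAlg K V r s)
    (P L : V × V × V) (hP : TrivAnn P) (hL : TrivAnn L) :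
    ∃ Q : V × V × V, TrivAnn Q ∧ Incid Q L ∧ ¬ Nbr P Q := by
  have hfd : Module.Finite K V := Module.finite_of_finrank_pos (by rw [hV.1]; norm_num)
  have hart : IsArtinianRing V := IsArtinianRing.of_finite K V
  obtain ⟨x, y, z⟩ := P
  obtain ⟨a, b, c⟩ := L
  have hloc : ∀ m : MaximalSpectrum V, ∃ u v w : V,
      ¬ (y * (a * v - b * u) - z * (c * u - a * w) ∈ m.asIdeal ∧
      z * (b * w - c * v) - x * (a * v - b * u) ∈ m.asIdeal ∧
      x * (c * u - a * w) - y * (b * w - c * v) ∈ m.asIdeal) := by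
    intro m
    have := m.isMaximal
    let _ := Ideal.Quotient.field m.asIdeal
    have e1 := max_step _ hP m.asIdeal
    have e2 := max_step _ hL m.asIdeal
    simp only [← Ideal.Quotient.eq_zero_iff_mem] at e1 e2
    obtain ⟨u, v, w, h⟩ := field_step _ _ _ _ _ _ e1 e2
    obtain ⟨u, rfl⟩ := Ideal.Quotient.mk_surjective u
    obtain ⟨v, rfl⟩ := Ideal.Quotient.mk_surjective v
    obtain ⟨w, rfl⟩ := Ideal.Quotient.mk_surjective w
    refine ⟨u, v, w, ?_⟩
    simpa only [← Ideal.Quotient.eq_zero_iff_mem, map_sub, map_mul] using h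
  choose u v w huvw using hloc
  have hcop : Pairwise (Function.onFun IsCoprime
      (fun m : MaximalSpectrum V => m.asIdeal)) := by
    intro m n hne
    have := m.isMaximal
    have := n.isMaximal
    exact Ideal.isCoprime_of_isMaximal (MaximalSpectrum.ext_iff.ne.mp hne)
  obtain ⟨U, hU⟩ := Ideal.pi_quotient_surjective hcop (fun m => Ideal.Quotient.mk _ (u m))
  obtain ⟨W, hW⟩ := Ideal.pi_quotient_surjective hcop (fun m => Ideal.Quotient.mk _ (w m))
  obtain ⟨T, hT⟩ := Ideal.pi_quotient_surjective hcop (fun m => Ideal.Quotient.mk _ (v m))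
  have hann := ann_step (y * (a * T - b * U) - z * (c * U - a * W))
    (z * (b * W - c * T) - x * (a * T - b * U))
    (x * (c * U - a * W) - y * (b * W - c * T)) (by
      intro m hm h
      apply huvw ⟨m, hm⟩
      have h1 := hU ⟨m, hm⟩
      have h2 := hW ⟨m, hm⟩
      have h3 := hT ⟨m, hm⟩
      simp only [← Ideal.Quotient.eq_zero_iff_mem, map_sub, map_mul] at h ⊢
      rw [← h1, ← h2, ← h3]
      exact h)
  refine ⟨(b * W - c * T, c * U - a * W, a * T - b * U), ?_, ?_, ?_⟩
  · intro k h1 h2 h3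
    simp only at h1 h2 h3
    apply hann
    · linear_combination y * h3 - z * h2
    · linear_combination z * h1 - x * h3
    · linear_combination x * h2 - y * h1
  · simp only [Incid]
    ring
  · rintro ⟨k, l, hne, heq⟩
    simp only [Prod.mk.injEq] at heq
    obtain ⟨h1, h2, h3⟩ := heq
    apply hne
    have hk : k = 0 := by
      apply hann
      · linear_combination (a * T - b * U) * h2 - (c * U - a * W) * h3
      · linear_combination (b * W - c * T) * h3 - (a * T - b * U) * h1
      · linear_combination (c * U - a * W) * h1 - (b * W - c * T) * h2
    have hl : l = 0 := by
      apply hann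
      · linear_combination z * h2 - y * h3
      · linear_combination x * h3 - z * h1
      · linear_combination y * h1 - x * h2
    rw [hk, hl]
end

section
/- For a point P and a line L of 𝒢(V), the following are equivalent: (i) P and L are neighboring; (ii) P is neighboring some point incident with L; (iii) L is neighboring some line through P. -/
theorem nonunit_mul_scalar (K : Type) [Field K] (V : Type) [CommRing V] [Algebra K V]
    (h2 : Module.finrank K V = 2) (t : V) (ht : ¬ IsUnit t) (ht0 : t ≠ 0) (v : V) :
    ∃ c : K, t * v = c • t := by
  have : FiniteDimensional K V := Module.finite_of_finrank_pos (by omega)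
  have hne : LinearMap.range (LinearMap.mulLeft K t) ≠ ⊤ := by
    intro h
    have h1 : (1 : V) ∈ LinearMap.range (LinearMap.mulLeft K t) := by rw [h]; trivial
    obtain ⟨w, hw⟩ := h1
    exact ht (IsUnit.of_mul_eq_one w (by simpa using hw))
  have hlt := Submodule.finrank_lt hne
  have hle : Module.finrank K (LinearMap.range (LinearMap.mulLeft K t)) ≤ 1 := by omega
  obtain ⟨g, hg⟩ := finrank_le_one_iff.mp hle
  obtain ⟨a, ha⟩ := hg ⟨t, 1, by simp⟩
  obtain ⟨b, hb⟩ := hg ⟨t * v, v, by simp⟩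
  have ha' : a • (g : V) = t := congrArg Subtype.val ha
  have hb' : b • (g : V) = t * v := congrArg Subtype.val hb
  have ha0 : a ≠ 0 := by
    rintro rfl
    exact ht0 (by rw [← ha', zero_smul])
  refine ⟨b * a⁻¹, ?_⟩
  have hgt : (g : V) = a⁻¹ • t := (inv_smul_eq_iff₀ ha0).mpr ha'.symm |>.symm
  exact hb'.symm.trans ((congrArg (b • ·) hgt).trans (smul_smul b a⁻¹ t))

theorem aux_WR (K : Type) [Field K] (V : Type) [CommRing V] [Algebra K V]
    (h2 : Module.finrank K V = 2) (t : V) (ht : ¬ IsUnit t) (ht0 : t ≠ 0)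
    (a b c : V) (hL : TrivAnn (a, b, c)) :
    ∃ w₁ w₂ w₃ r₁ r₂ r₃ : V, t * (a * w₁ + b * w₂ + c * w₃) = t ∧
      a * r₁ + b * r₂ + c * r₃ = 0 ∧
      ∀ v, v * t * r₁ = 0 → v * t * r₂ = 0 → v * t * r₃ = 0 → v * t = 0 := by
  have key : ∀ x : V, t * x ≠ 0 → ∃ y : V, t * (x * y) = t := by
    intro x hx
    obtain ⟨k, hk⟩ := nonunit_mul_scalar K V h2 t ht ht0 x
    have hk0 : k ≠ 0 := by
      rintro rfl
      exact hx (by rw [hk, zero_smul])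
    refine ⟨algebraMap K V k⁻¹, ?_⟩
    rw [← mul_assoc, hk, mul_comm, ← Algebra.smul_def, smul_smul, inv_mul_cancel₀ hk0, one_smul]
  by_cases ha : t * a = 0
  · by_cases hb : t * b = 0
    · have hc : t * c ≠ 0 := fun hc => ht0 (hL t ha hb hc)
      obtain ⟨y, hy⟩ := key c hc
      refine ⟨0, 0, y, -c, 0, a, by linear_combination hy, by ring, fun v h1 _ _ => ?_⟩
      linear_combination (-y) * h1 - v * hy
    · obtain ⟨y, hy⟩ := key b hb
      refine ⟨0, y, 0, -b, a, 0, by linear_combination hy, by ring, fun v h1 _ _ => ?_⟩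
      linear_combination (-y) * h1 - v * hy
  · obtain ⟨y, hy⟩ := key a ha
    refine ⟨y, 0, 0, -b, a, 0, by linear_combination hy, by ring, fun v _ h1 _ => ?_⟩
    linear_combination y * h1 - v * hy

theorem aux_half (K : Type) [Field K] (V : Type) [CommRing V] [Algebra K V]
    (h2 : Module.finrank K V = 2)
    (P L : V × V × V) (hP : TrivAnn P) (hL : TrivAnn L) :
    NbrPL P L ↔ ∃ Q : V × V × V, TrivAnn Q ∧ Incid Q L ∧ Nbr P Q := by
  obtain ⟨x, y, z⟩ := P
  obtain ⟨a, b, c⟩ := L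
  have : Nontrivial V := Module.nontrivial_of_finrank_pos (R := K) (by omega)
  constructor
  · intro h
    simp only [NbrPL] at h
    obtain ⟨t, htdef⟩ : ∃ t, t = a * x + b * y + c * z := ⟨_, rfl⟩
    rw [← htdef] at h
    by_cases ht0 : t = 0
    · refine ⟨(x, y, z), hP, ?_, 1, 1, by simp, rfl⟩
      simp only [Incid]
      rw [← htdef, ht0]
    obtain ⟨w₁, w₂, w₃, r₁, r₂, r₃, hW, hR, hann⟩ := aux_WR K V h2 t h ht0 a b c hL
    obtain ⟨k, hk⟩ := nonunit_mul_scalar K V h2 t h ht0 t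
    by_cases hk0 : k = 0
    · have htt : t * t = 0 := by rw [hk, hk0, zero_smul]
      refine ⟨(x - t * w₁, y - t * w₂, z - t * w₃), ?_, ?_, t, t, by simp [ht0], ?_⟩
      · intro v h1 h2 h3
        simp only at h1 h2 h3
        have hvt : t * v = 0 := by
          refine hP _ ?_ ?_ ?_ <;> simp only
          · linear_combination t * h1 + v * w₁ * htt
          · linear_combination t * h2 + v * w₂ * htt
          · linear_combination t * h3 + v * w₃ * htt
        refine hP _ ?_ ?_ ?_ <;> simp only
        · linear_combination h1 + w₁ * hvt
        · linear_combination h2 + w₂ * hvt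
        · linear_combination h3 + w₃ * hvt
      · simp only [Incid]
        linear_combination -htdef - hW
      · simp only [Prod.mk.injEq]
        refine ⟨?_, ?_, ?_⟩
        · linear_combination w₁ * htt
        · linear_combination w₂ * htt
        · linear_combination w₃ * htt
    · obtain ⟨g, hg⟩ : ∃ g : V, t * t * g = t := by
        refine ⟨algebraMap K V k⁻¹, ?_⟩
        rw [hk, mul_comm, ← Algebra.smul_def, smul_smul, inv_mul_cancel₀ hk0, one_smul]
      refine ⟨((1 - t * g) * x + t * g * r₁, (1 - t * g) * y + t * g * r₂,
        (1 - t * g) * z + t * g * r₃), ?_, ?_, 1 - t * g, 1 - t * g, ?_, ?_⟩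
      · intro v h1 h2 h3
        simp only at h1 h2 h3
        have hvt : v * t = 0 := by
          refine hann v ?_ ?_ ?_
          · linear_combination t * h1 + (v * x - v * r₁) * hg
          · linear_combination t * h2 + (v * y - v * r₂) * hg
          · linear_combination t * h3 + (v * z - v * r₃) * hg
        refine hP _ ?_ ?_ ?_ <;> simp only
        · linear_combination h1 + (g * x - g * r₁) * hvt
        · linear_combination h2 + (g * y - g * r₂) * hvt
        · linear_combination h3 + (g * z - g * r₃) * hvt
      · simp only [Incid]
        linear_combination -(1 - t * g) * htdef + t * g * hR - hg
      · intro h0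
        have h1 : 1 - t * g = 0 := congrArg Prod.fst h0
        exact h (IsUnit.of_mul_eq_one g (by linear_combination -h1))
      · simp only [Prod.mk.injEq]
        refine ⟨?_, ?_, ?_⟩
        · linear_combination (g * r₁ - g * x) * hg
        · linear_combination (g * r₂ - g * y) * hg
        · linear_combination (g * r₃ - g * z) * hg
  · rintro ⟨⟨u, v, w⟩, hQ, hI, k, l, hkl, he⟩ hu
    simp only [Prod.mk.injEq, Incid] at he hI hu
    obtain ⟨e1, e2, e3⟩ := he
    have hk : k = 0 := by
      apply hu.mul_left_eq_zero.mp
      linear_combination a * e1 + b * e2 + c * e3 + l * hI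
    subst hk
    have hl : l = 0 := by
      refine hQ l ?_ ?_ ?_ <;> simp only
      · linear_combination -e1
      · linear_combination -e2
      · linear_combination -e3
    exact hkl (by rw [hl])

/-- For a point `P` and a line `L` of `𝒢(V)` the following are equivalent:
(i) `P` and `L` are neighboring; (ii) `P` neighbors some point incident with `L`;
(iii) `L` neighbors some line through `P`. -/
theorem stmt6 (K : Type) [Field K] (V : Type) [CommRing V] [Algebra K V] (r s : V)
    (hV : GoodAlg K V r s)
    (P L : V × V × V) (hP : TrivAnn P) (hL : TrivAnn L) :
    (NbrPL P L ↔ ∃ Q : V × V × V, TrivAnn Q ∧ Incid Q L ∧ Nbr P Q) ∧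
    (NbrPL P L ↔ ∃ M : V × V × V, TrivAnn M ∧ Incid P M ∧ Nbr L M) := by
  have h1 := aux_half K V hV.1 P L hP hL
  have h2 := aux_half K V hV.1 L P hL hP
  refine ⟨h1, ?_⟩
  simp only [NbrPL, Incid] at h2 ⊢
  simpa only [mul_comm] using h2
end

section
/- A triple (P₁,P₂,P₃) of points of 𝒢(V) is a proper ordered triangle if and only if, after some permutation of the three points, P₁ and P₂ are non-neighboring and P₃ is not neighboring the unique line P₁P₂ through P₁ and P₂. -/
/-- A proper ordered triangle: three pairwise non-neighboring points such that the three
(unique) joining lines are pairwise non-neighboring. -/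
def ProperTri {V : Type} [CommRing V] (P₁ P₂ P₃ : V × V × V) : Prop :=
  ¬ Nbr P₁ P₂ ∧ ¬ Nbr P₂ P₃ ∧ ¬ Nbr P₃ P₁ ∧
  ∃ L₁₂ L₂₃ L₃₁ : V × V × V,
    TrivAnn L₁₂ ∧ TrivAnn L₂₃ ∧ TrivAnn L₃₁ ∧
    Incid P₁ L₁₂ ∧ Incid P₂ L₁₂ ∧ Incid P₂ L₂₃ ∧ Incid P₃ L₂₃ ∧
    Incid P₃ L₃₁ ∧ Incid P₁ L₃₁ ∧
    ¬ Nbr L₁₂ L₂₃ ∧ ¬ Nbr L₂₃ L₃₁ ∧ ¬ Nbr L₃₁ L₁₂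

def crs {V : Type} [CommRing V] (p q : V × V × V) : V × V × V :=
  (p.2.1 * q.2.2 - p.2.2 * q.2.1, p.2.2 * q.1 - p.1 * q.2.2, p.1 * q.2.1 - p.2.1 * q.1)

def dt {V : Type} [CommRing V] (p q r : V × V × V) : V :=
  (crs p q).1 * r.1 + (crs p q).2.1 * r.2.1 + (crs p q).2.2 * r.2.2

theorem not_nbr_iff {V : Type} [CommRing V] (p q : V × V × V) (hp : TrivAnn p)
    (hq : TrivAnn q) : ¬ Nbr p q ↔ TrivAnn (crs p q) := by
  obtain ⟨a, b, c⟩ := p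
  obtain ⟨x, y, z⟩ := q
  simp only [TrivAnn, crs, Nbr, Prod.mk.injEq, ne_eq] at *
  constructor
  · intro h v h1 h2 h3
    by_contra hv
    apply hv
    apply hp
    · by_contra h0
      exact h ⟨v * x, v * a, fun e => h0 e.2, by ring, by linear_combination -h3,
        by linear_combination h2⟩
    · by_contra h0
      exact h ⟨v * y, v * b, fun e => h0 e.2, by linear_combination h3, by ring,
        by linear_combination -h1⟩
    · by_contra h0
      exact h ⟨v * z, v * c, fun e => h0 e.2, by linear_combination -h2,
        by linear_combination h1, by ring⟩
  · rintro h ⟨k, l, hkl, h1, h2, h3⟩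
    apply hkl
    constructor
    · apply h
      · linear_combination z * h2 - y * h3
      · linear_combination x * h3 - z * h1
      · linear_combination y * h1 - x * h2
    · apply h
      · linear_combination c * h2 - b * h3
      · linear_combination a * h3 - c * h1
      · linear_combination b * h1 - a * h2

theorem unimod_s8 {V : Type} [CommRing V] [IsArtinianRing V] (p : V × V × V) (hp : TrivAnn p) :
    ∃ x y z : V, x * p.1 + y * p.2.1 + z * p.2.2 = 1 := by
  by_contra hc
  have hI : Ideal.span {p.1, p.2.1, p.2.2} ≠ ⊤ := by
    intro h
    have h1 : (1 : V) ∈ Ideal.span {p.1, p.2.1, p.2.2} := by rw [h]; trivial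
    obtain ⟨x, t, ht, h2⟩ := Ideal.mem_span_insert.1 h1
    obtain ⟨y, z, h3⟩ := Ideal.mem_span_pair.1 ht
    exact hc ⟨x, y, z, by rw [h2, ← h3]; ring⟩
  obtain ⟨M, hM, hle⟩ := Ideal.exists_le_maximal _ hI
  have hmin : M ∈ (Module.annihilator V V).minimalPrimes := by
    refine ⟨⟨hM.isPrime, ?_⟩, ?_⟩
    · intro x hx
      have := Module.mem_annihilator.1 hx 1
      simp at this
      simp [this]
    · rintro J ⟨hJ, -⟩ hJM
      have := IsArtinianRing.isMaximal_of_isPrime J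
      exact (this.eq_of_le hM.ne_top hJM).ge
  obtain ⟨-, v, hv⟩ := isAssociatedPrime_iff.1
    (Module.associatedPrimes.minimalPrimes_annihilator_subset_associatedPrimes V V hmin)
  have key : ∀ t : V, t ∈ M ↔ t * v = 0 := by
    intro t
    rw [hv, Submodule.mem_colon_singleton, Submodule.mem_bot, smul_eq_mul]
  have hv0 : v = 0 := by
    apply hp
    · rw [mul_comm]; exact (key _).1 (hle (Ideal.subset_span (by simp)))
    · rw [mul_comm]; exact (key _).1 (hle (Ideal.subset_span (by simp)))
    · rw [mul_comm]; exact (key _).1 (hle (Ideal.subset_span (by simp)))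
  exact hM.ne_top ((Ideal.eq_top_iff_one _).2 ((key 1).2 (by simp [hv0])))

theorem line_eq {V : Type} [CommRing V] [IsArtinianRing V] (p q L : V × V × V)
    (h : TrivAnn (crs p q)) (h1 : Incid p L) (h2 : Incid q L) :
    ∃ u : V, L.1 = u * (crs p q).1 ∧ L.2.1 = u * (crs p q).2.1 ∧ L.2.2 = u * (crs p q).2.2 := by
  obtain ⟨w1, w2, w3, hw⟩ := unimod_s8 _ h
  obtain ⟨a, b, c⟩ := p
  obtain ⟨x, y, z⟩ := q
  obtain ⟨l, m, n⟩ := L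
  simp only [crs, Incid] at *
  refine ⟨w1 * l + w2 * m + w3 * n, ?_, ?_, ?_⟩
  · linear_combination (-l) * hw - (w2 * z - w3 * y) * h1 + (w2 * c - w3 * b) * h2
  · linear_combination (-m) * hw - (w3 * x - w1 * z) * h1 + (w3 * a - w1 * c) * h2
  · linear_combination (-n) * hw - (w1 * y - w2 * x) * h1 + (w1 * b - w2 * a) * h2

theorem dt_of_line {V : Type} [CommRing V] [IsArtinianRing V] (p q r L : V × V × V)
    (h : TrivAnn (crs p q)) (h1 : Incid p L) (h2 : Incid q L) (h3 : ¬ NbrPL r L) :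
    IsUnit (dt p q r) := by
  obtain ⟨u, e1, e2, e3⟩ := line_eq p q L h h1 h2
  rw [NbrPL, not_not] at h3
  refine isUnit_of_dvd_unit ⟨u, ?_⟩ h3
  rw [e1, e2, e3, dt]; ring

theorem triv_of_dt {V : Type} [CommRing V] (p q r : V × V × V) (h : IsUnit (dt p q r)) :
    TrivAnn (crs p q) := by
  intro v h1 h2 h3
  refine h.mul_left_eq_zero.1 ?_
  rw [dt]
  linear_combination r.1 * h1 + r.2.1 * h2 + r.2.2 * h3

theorem triv_crs_crs {V : Type} [CommRing V] (p q r : V × V × V) (hq : TrivAnn q)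
    (h : IsUnit (dt p q r)) : TrivAnn (crs (crs p q) (crs q r)) := by
  intro v h1 h2 h3
  refine h.mul_left_eq_zero.1 ?_
  apply hq
  · rw [← h1]; simp only [crs, dt]; ring
  · rw [← h2]; simp only [crs, dt]; ring
  · rw [← h3]; simp only [crs, dt]; ring

theorem dt_rot {V : Type} [CommRing V] (p q r : V × V × V) : dt q r p = dt p q r := by
  simp only [crs, dt]; ring

theorem dt_swap {V : Type} [CommRing V] (p q r : V × V × V) : dt q p r = - dt p q r := by
  simp only [crs, dt]; ring

theorem incid_l {V : Type} [CommRing V] (p q : V × V × V) : Incid p (crs p q) := by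
  simp only [crs, Incid]; ring

theorem incid_r {V : Type} [CommRing V] (p q : V × V × V) : Incid q (crs p q) := by
  simp only [crs, Incid]; ring

theorem proper_of_dt {V : Type} [CommRing V] (p q r : V × V × V) (hp : TrivAnn p)
    (hq : TrivAnn q) (hr : TrivAnn r) (h : IsUnit (dt p q r)) : ProperTri p q r := by
  have h' : IsUnit (dt q r p) := by rwa [dt_rot]
  have h'' : IsUnit (dt r p q) := by rwa [dt_rot, dt_rot]
  have t1 := triv_of_dt _ _ _ h
  have t2 := triv_of_dt _ _ _ h'
  have t3 := triv_of_dt _ _ _ h''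
  exact ⟨(not_nbr_iff _ _ hp hq).2 t1, (not_nbr_iff _ _ hq hr).2 t2, (not_nbr_iff _ _ hr hp).2 t3,
    crs p q, crs q r, crs r p, t1, t2, t3, incid_l _ _, incid_r _ _, incid_l _ _, incid_r _ _,
    incid_l _ _, incid_r _ _, (not_nbr_iff _ _ t1 t2).2 (triv_crs_crs _ _ _ hq h),
    (not_nbr_iff _ _ t2 t3).2 (triv_crs_crs _ _ _ hr h'),
    (not_nbr_iff _ _ t3 t1).2 (triv_crs_crs _ _ _ hp h'')⟩

theorem dt_of_proper {V : Type} [CommRing V] [IsArtinianRing V] (p q r : V × V × V)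
    (hp : TrivAnn p) (hq : TrivAnn q) (hr : TrivAnn r) (h : ProperTri p q r) :
    IsUnit (dt p q r) := by
  obtain ⟨n1, n2, -, L, M, -, tL, tM, -, i1, i2, i3, i4, -, -, n, -, -⟩ := h
  rw [not_nbr_iff _ _ hp hq] at n1
  rw [not_nbr_iff _ _ hq hr] at n2
  rw [not_nbr_iff _ _ tL tM] at n
  obtain ⟨u, e1, e2, e3⟩ := line_eq _ _ _ n1 i1 i2
  obtain ⟨w, f1, f2, f3⟩ := line_eq _ _ _ n2 i3 i4
  apply IsArtinianRing.isUnit_of_mem_nonZeroDivisors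
  rw [mem_nonZeroDivisors_iff_right]
  intro v hv
  apply n
  · simp only [crs, e1, e2, e3, f1, f2, f3, dt] at hv ⊢
    linear_combination u * w * q.1 * hv
  · simp only [crs, e1, e2, e3, f1, f2, f3, dt] at hv ⊢
    linear_combination u * w * q.2.1 * hv
  · simp only [crs, e1, e2, e3, f1, f2, f3, dt] at hv ⊢
    linear_combination u * w * q.2.2 * hv

/-- A triple `(P₁,P₂,P₃)` of points of `𝒢(V)` is a proper ordered triangle
iff after some permutation of the three points, `P₁` and `P₂` are non-neighboring and `P₃`
does not neighbor the (unique) line through `P₁` and `P₂`. -/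
theorem stmt8 (K : Type) [Field K] (V : Type) [CommRing V] [Algebra K V] (r s : V)
    (hV : GoodAlg K V r s)
    (P₁ P₂ P₃ : V × V × V) (hP₁ : TrivAnn P₁) (hP₂ : TrivAnn P₂) (hP₃ : TrivAnn P₃) :
    ProperTri P₁ P₂ P₃ ↔
      ∃ σ : Equiv.Perm (Fin 3),
        ¬ Nbr (![P₁, P₂, P₃] (σ 0)) (![P₁, P₂, P₃] (σ 1)) ∧
        ∃ L : V × V × V, TrivAnn L ∧ Incid (![P₁, P₂, P₃] (σ 0)) L ∧
          Incid (![P₁, P₂, P₃] (σ 1)) L ∧ ¬ NbrPL (![P₁, P₂, P₃] (σ 2)) L := by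
  have : Module.Finite K V := Module.finite_of_finrank_pos (by rw [hV.1]; norm_num)
  have : IsArtinianRing V := IsArtinianRing.of_finite K V
  constructor
  · intro h
    have hd := dt_of_proper _ _ _ hP₁ hP₂ hP₃ h
    refine ⟨1, ?_, crs P₁ P₂, triv_of_dt _ _ _ hd, ?_, ?_, ?_⟩
    · exact h.1
    · exact incid_l _ _
    · exact incid_r _ _
    · exact not_not.2 hd
  · rintro ⟨σ, h1, L, -, h2, h3, h4⟩
    have hT : ∀ i, TrivAnn (![P₁, P₂, P₃] i) := by
      intro i
      fin_cases i
      · exact hP₁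
      · exact hP₂
      · exact hP₃
    rw [not_nbr_iff _ _ (hT _) (hT _)] at h1
    have hd := dt_of_line _ _ _ L h1 h2 h3 h4
    apply proper_of_dt _ _ _ hP₁ hP₂ hP₃
    have n01 : σ 0 ≠ σ 1 := σ.injective.ne (by decide)
    have n02 : σ 0 ≠ σ 2 := σ.injective.ne (by decide)
    have n12 : σ 1 ≠ σ 2 := σ.injective.ne (by decide)
    clear h1 h2 h3 h4
    generalize σ 0 = i at *
    generalize σ 1 = j at *
    generalize σ 2 = k at *
    have e1 := dt_rot P₁ P₂ P₃
    have e2 := dt_rot P₂ P₃ P₁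
    have e3 := dt_swap P₁ P₂ P₃
    have e4 := dt_rot P₂ P₁ P₃
    have e5 := dt_rot P₁ P₃ P₂
    fin_cases i <;> fin_cases j <;> fin_cases k <;>
      first
      | exact absurd rfl n01
      | exact absurd rfl n02
      | exact absurd rfl n12
      | simpa [e1, e2, e3, e4, e5] using hd
end

section
/- Let P₁ = V*(x₁,y₁,z₁) and P₂ = V*(x₂,y₂,z₂) be two non-neighboring points of 𝒢(V). Then the points of the unique line P₁P₂ through P₁ and P₂ are exactly the classes V*(a₁x₁+a₂x₂, a₁y₁+a₂y₂, a₁z₁+a₂z₂) where a₁,a₂ ∈ V are such that at most one of a₁,a₂ lies in K·r and at most one of a₁,a₂ lies in K·s; moreover, for every such pair (a₁,a₂) the triple (a₁x₁+a₂x₂, a₁y₁+a₂y₂, a₁z₁+a₂z₂) has trivial annihilator and the corresponding point is incident with P₁P₂. -/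
/-- Non-units are zero divisors. -/
theorem key_zd (K : Type) [Field K] (V : Type) [CommRing V] [Algebra K V]
    (hf : Module.finrank K V = 2) (w : V) (hw : ¬ IsUnit w) : ∃ t : V, t ≠ 0 ∧ t * w = 0 := by
  have : Module.Finite K V := Module.finite_of_finrank_pos (by omega)
  by_contra hcon
  push Not at hcon
  apply hw
  have hinj : Function.Injective (LinearMap.mulLeft K w) := by
    rw [injective_iff_map_eq_zero]
    intro t ht
    by_contra h0
    apply hcon t h0
    rw [mul_comm]
    simpa using ht
  obtain ⟨t, ht⟩ := (LinearMap.injective_iff_surjective.mp hinj) 1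
  exact IsUnit.of_mul_eq_one t (by simpa using ht)

/-- Proper ideals are contained in `K·w` for a non-unit `w`. -/
theorem key_ideal (K : Type) [Field K] (V : Type) [CommRing V] [Algebra K V]
    (hf : Module.finrank K V = 2) (I : Ideal V) (hI : I ≠ ⊤) :
    ∃ w : V, ¬ IsUnit w ∧ ∀ x ∈ I, ∃ k : K, x = k • w := by
  have : Module.Finite K V := Module.finite_of_finrank_pos (by omega)
  have hlt : Module.finrank K (I.restrictScalars K) < Module.finrank K V := by
    apply Submodule.finrank_lt
    intro h
    apply hI
    rw [Ideal.eq_top_iff_one]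
    have : (1 : V) ∈ I.restrictScalars K := by rw [h]; trivial
    simpa using this
  obtain ⟨⟨w, hwI⟩, hw⟩ := (finrank_le_one_iff (K := K) (V := I.restrictScalars K)).mp (by omega)
  refine ⟨w, fun hu => hI (Ideal.eq_top_of_isUnit_mem I (by simpa using hwI) hu), ?_⟩
  intro x hx
  obtain ⟨k, hk⟩ := hw ⟨x, by simpa using hx⟩
  exact ⟨k, (congrArg Subtype.val hk).symm⟩

/-- Parametrization of the points of the line through two non-neighboring
points `P₁ = V*(x₁,y₁,z₁)` and `P₂ = V*(x₂,y₂,z₂)`: they are exactly the classes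
`V*(a₁x₁+a₂x₂, a₁y₁+a₂y₂, a₁z₁+a₂z₂)` with at most one of `a₁,a₂` in `K·r` and at most one
in `K·s`; and every such pair gives a triple with trivial annihilator incident with the
line. -/
theorem stmt9 (K : Type) [Field K] (V : Type) [CommRing V] [Algebra K V] (r s : V)
    (hV : GoodAlg K V r s)
    (x₁ y₁ z₁ x₂ y₂ z₂ a b c : V)
    (hP₁ : TrivAnn (x₁, y₁, z₁)) (hP₂ : TrivAnn (x₂, y₂, z₂))
    (hnn : ¬ Nbr (x₁, y₁, z₁) (x₂, y₂, z₂))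
    (hL : TrivAnn (a, b, c))
    (h₁ : Incid (x₁, y₁, z₁) (a, b, c)) (h₂ : Incid (x₂, y₂, z₂) (a, b, c)) :
    (∀ q : V × V × V, TrivAnn q → Incid q (a, b, c) →
      ∃ a₁ a₂ : V,
        (¬ ((∃ k : K, a₁ = k • r) ∧ (∃ k : K, a₂ = k • r))) ∧
        (¬ ((∃ k : K, a₁ = k • s) ∧ (∃ k : K, a₂ = k • s))) ∧
        SameCls (a₁ * x₁ + a₂ * x₂, a₁ * y₁ + a₂ * y₂, a₁ * z₁ + a₂ * z₂) q) ∧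
    (∀ a₁ a₂ : V,
      (¬ ((∃ k : K, a₁ = k • r) ∧ (∃ k : K, a₂ = k • r))) →
      (¬ ((∃ k : K, a₁ = k • s) ∧ (∃ k : K, a₂ = k • s))) →
      TrivAnn (a₁ * x₁ + a₂ * x₂, a₁ * y₁ + a₂ * y₂, a₁ * z₁ + a₂ * z₂) ∧
      Incid (a₁ * x₁ + a₂ * x₂, a₁ * y₁ + a₂ * y₂, a₁ * z₁ + a₂ * z₂) (a, b, c)) := by
  obtain ⟨hf, -, hnu⟩ := hV
  have : Module.Finite K V := Module.finite_of_finrank_pos (by omega)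
  have hr : ¬ IsUnit r := (hnu r).mpr (Or.inl ⟨1, by simp⟩)
  have hs : ¬ IsUnit s := (hnu s).mpr (Or.inr ⟨1, by simp⟩)
  have hind : ∀ k l : V, k * x₁ + l * x₂ = 0 → k * y₁ + l * y₂ = 0 → k * z₁ + l * z₂ = 0 →
      k = 0 ∧ l = 0 := by
    intro k l e1 e2 e3
    by_contra hne
    apply hnn
    refine ⟨k, -l, ?_, ?_⟩
    · intro h
      simp only [Prod.mk.injEq, neg_eq_zero] at h
      exact hne h
    · simp only [Prod.mk.injEq]
      exact ⟨by linear_combination e1, by linear_combination e2, by linear_combination e3⟩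
  simp only [Incid] at h₁ h₂
  constructor
  · intro q hq hqL
    simp only [Incid] at hqL
    let φ : (V × V) →ₗ[K] (V × V × V) :=
      { toFun := fun p => (p.1 * x₁ + p.2 * x₂, p.1 * y₁ + p.2 * y₂, p.1 * z₁ + p.2 * z₂)
        map_add' := by
          intro p pb
          simp only [Prod.fst_add, Prod.snd_add, Prod.mk_add_mk, Prod.mk.injEq]
          exact ⟨by ring, by ring, by ring⟩
        map_smul' := by
          intro k p
          simp [smul_add] }
    let ψ : (V × V × V) →ₗ[K] V :=
      { toFun := fun p => a * p.1 + b * p.2.1 + c * p.2.2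
        map_add' := by
          intro p pb
          simp only [Prod.fst_add, Prod.snd_add]
          ring
        map_smul' := by
          intro k p
          simp [smul_add] }
    have hφ : Function.Injective φ := by
      rw [injective_iff_map_eq_zero]
      rintro ⟨k, l⟩ h
      have h' : (k * x₁ + l * x₂, k * y₁ + l * y₂, k * z₁ + l * z₂) = (0 : V × V × V) := h
      simp only [Prod.mk_eq_zero] at h'
      obtain ⟨e1, e2⟩ := hind k l h'.1 h'.2.1 h'.2.2
      simp [e1, e2]
    have htop : Ideal.span {a, b, c} = (⊤ : Ideal V) := by
      by_contra hne
      obtain ⟨w, hw, hI⟩ := key_ideal K V hf _ hne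
      obtain ⟨t, ht0, ht⟩ := key_zd K V hf w hw
      have hk : ∀ x ∈ Ideal.span {a, b, c}, t * x = 0 := by
        intro x hx
        obtain ⟨k, rfl⟩ := hI x hx
        rw [mul_smul_comm, ht, smul_zero]
      exact ht0 (hL t (hk a (Ideal.subset_span (by simp))) (hk b (Ideal.subset_span (by simp)))
        (hk c (Ideal.subset_span (by simp))))
    have hψ : Function.Surjective ψ := by
      intro v
      have hv : v ∈ Ideal.span {a, b, c} := by rw [htop]; trivial
      rw [Ideal.mem_span_insert] at hv
      obtain ⟨p, z, hz, rfl⟩ := hv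
      rw [Ideal.mem_span_pair] at hz
      obtain ⟨pb, pc, rfl⟩ := hz
      refine ⟨(p, pb, pc), ?_⟩
      change a * p + b * pb + c * pc = _
      ring
    have hle : LinearMap.range φ ≤ LinearMap.ker ψ := by
      rintro _ ⟨⟨k, l⟩, rfl⟩
      change a * (k * x₁ + l * x₂) + b * (k * y₁ + l * y₂) + c * (k * z₁ + l * z₂) = 0
      linear_combination k * h₁ + l * h₂
    have heq : LinearMap.range φ = LinearMap.ker ψ := by
      apply Submodule.eq_of_le_of_finrank_eq hle
      have e1 := LinearMap.finrank_range_of_inj hφ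
      have e2 := ψ.finrank_range_add_finrank_ker
      rw [LinearMap.range_eq_top.mpr hψ, finrank_top] at e2
      simp only [Module.finrank_prod] at e1 e2
      omega
    have hqr : q ∈ LinearMap.range φ := by
      rw [heq]
      exact hqL
    obtain ⟨⟨a₁, a₂⟩, rfl⟩ := hqr
    have hno : ∀ w : V, ¬ IsUnit w → ¬ ((∃ k : K, a₁ = k • w) ∧ (∃ k : K, a₂ = k • w)) := by
      rintro w hw ⟨⟨k, hk⟩, ⟨l, hl⟩⟩
      obtain ⟨t, ht0, ht⟩ := key_zd K V hf w hw
      have t1 : t * a₁ = 0 := by rw [hk, mul_smul_comm, ht, smul_zero]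
      have t2 : t * a₂ = 0 := by rw [hl, mul_smul_comm, ht, smul_zero]
      apply ht0
      apply hq t
      · change t * (a₁ * x₁ + a₂ * x₂) = 0
        linear_combination x₁ * t1 + x₂ * t2
      · change t * (a₁ * y₁ + a₂ * y₂) = 0
        linear_combination y₁ * t1 + y₂ * t2
      · change t * (a₁ * z₁ + a₂ * z₂) = 0
        linear_combination z₁ * t1 + z₂ * t2
    refine ⟨a₁, a₂, hno r hr, hno s hs, 1, isUnit_one, ?_⟩
    simp only [one_mul]
    rfl
  · intro a₁ a₂ har has
    constructor
    · intro v e1 e2 e3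
      simp only at e1 e2 e3
      obtain ⟨f1, f2⟩ := hind (v * a₁) (v * a₂) (by linear_combination e1)
        (by linear_combination e2) (by linear_combination e3)
      by_contra hv
      let I : Ideal V := LinearMap.ker (LinearMap.mulLeft V v)
      have hmem : ∀ x : V, x ∈ I ↔ v * x = 0 := by
        intro x
        simp [I, LinearMap.mem_ker]
      have hI : I ≠ ⊤ := by
        rw [Ideal.ne_top_iff_one, hmem]
        simpa using hv
      obtain ⟨w, hw, hIw⟩ := key_ideal K V hf I hI
      obtain ⟨k1, hk1⟩ := hIw a₁ ((hmem _).mpr f1)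
      obtain ⟨k2, hk2⟩ := hIw a₂ ((hmem _).mpr f2)
      rcases (hnu w).mp hw with ⟨k, rfl⟩ | ⟨k, rfl⟩
      · exact har ⟨⟨k1 * k, by rw [hk1, smul_smul]⟩, ⟨k2 * k, by rw [hk2, smul_smul]⟩⟩
      · exact has ⟨⟨k1 * k, by rw [hk1, smul_smul]⟩, ⟨k2 * k, by rw [hk2, smul_smul]⟩⟩
    · simp only [Incid]
      linear_combination a₁ * h₁ + a₂ * h₂
end

section
/- Let Pᵢ = V*(xᵢ,yᵢ,zᵢ), i = 1,2,3,4, be four points of 𝒢(V). Then (P₁,P₂,P₃,P₄) is a proper ordered quadrangle if and only if the determinant D of the 3×3 matrix over V with rows (x₁,y₁,z₁), (x₂,y₂,z₂), (x₃,y₃,z₃) is a unit of V and there exist units a₁,a₂,a₃ ∈ V* with (x₄,y₄,z₄) = a₁(x₁,y₁,z₁) + a₂(x₂,y₂,z₂) + a₃(x₃,y₃,z₃). -/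
/-- A proper ordered quadrangle: every ordered subtriple is a proper ordered triangle. -/
def ProperQuad {V : Type} [CommRing V] (P₁ P₂ P₃ P₄ : V × V × V) : Prop :=
  ∀ i j k : Fin 4, i ≠ j → i ≠ k → j ≠ k →
    ProperTri (![P₁, P₂, P₃, P₄] i) (![P₁, P₂, P₃, P₄] j) (![P₁, P₂, P₃, P₄] k)

/-- The determinant of three triples. -/
def triDet {V : Type} [CommRing V] (p q r : V × V × V) : V :=
  p.1 * (q.2.1 * r.2.2 - q.2.2 * r.2.1) - p.2.1 * (q.1 * r.2.2 - q.2.2 * r.1)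
    + p.2.2 * (q.1 * r.2.1 - q.2.1 * r.1)

/-- The cross product of two triples. -/
def triCross {V : Type} [CommRing V] (p q : V × V × V) : V × V × V :=
  (p.2.1 * q.2.2 - p.2.2 * q.2.1, p.2.2 * q.1 - p.1 * q.2.2, p.1 * q.2.1 - p.2.1 * q.1)

lemma triDet_rot {V : Type} [CommRing V] (p q r : V × V × V) : triDet q r p = triDet p q r := by
  simp only [triDet]; ring

lemma not_nbr_of_det {V : Type} [CommRing V] (p q r : V × V × V) (h : IsUnit (triDet p q r)) :
    ¬ Nbr p q := by
  rintro ⟨k, l, hkl, he⟩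
  simp only [Prod.mk.injEq] at he
  obtain ⟨h1, h2, h3⟩ := he
  apply hkl
  have hk : k * triDet p q r = 0 := by
    simp only [triDet]
    linear_combination (q.2.1 * r.2.2 - q.2.2 * r.2.1) * h1 - (q.1 * r.2.2 - q.2.2 * r.1) * h2
      + (q.1 * r.2.1 - q.2.1 * r.1) * h3
  have hl : l * triDet p q r = 0 := by
    simp only [triDet]
    linear_combination (p.2.1 * r.2.2 - p.2.2 * r.2.1) * h1 - (p.1 * r.2.2 - p.2.2 * r.1) * h2
      + (p.1 * r.2.1 - p.2.1 * r.1) * h3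
  rw [h.mul_left_eq_zero] at hk hl
  rw [hk, hl]

lemma cross_trivAnn {V : Type} [CommRing V] (p q r : V × V × V) (h : IsUnit (triDet p q r)) :
    TrivAnn (triCross p q) := by
  intro v h1 h2 h3
  rw [← h.mul_left_eq_zero]
  simp only [triDet, triCross] at *
  linear_combination r.1 * h1 + r.2.1 * h2 + r.2.2 * h3

lemma cross_incid_left {V : Type} [CommRing V] (p q : V × V × V) : Incid p (triCross p q) := by
  simp only [Incid, triCross]; ring

lemma cross_incid_right {V : Type} [CommRing V] (p q : V × V × V) : Incid q (triCross p q) := by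
  simp only [Incid, triCross]; ring

lemma cross_not_nbr {V : Type} [CommRing V] (p q r : V × V × V) (h : IsUnit (triDet p q r)) :
    ¬ Nbr (triCross p q) (triCross q r) := by
  rintro ⟨k, l, hkl, he⟩
  simp only [Prod.mk.injEq, triCross] at he
  obtain ⟨h1, h2, h3⟩ := he
  apply hkl
  have hk : k * triDet p q r = 0 := by
    simp only [triDet]
    linear_combination r.1 * h1 + r.2.1 * h2 + r.2.2 * h3
  have hl : l * triDet p q r = 0 := by
    simp only [triDet]
    linear_combination -p.1 * h1 - p.2.1 * h2 - p.2.2 * h3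
  rw [h.mul_left_eq_zero] at hk hl
  rw [hk, hl]

lemma properTri_of_det {V : Type} [CommRing V] (p q r : V × V × V) (h : IsUnit (triDet p q r)) :
    ProperTri p q r := by
  have h' : IsUnit (triDet q r p) := by rwa [triDet_rot]
  have h'' : IsUnit (triDet r p q) := by rwa [triDet_rot, triDet_rot]
  exact ⟨not_nbr_of_det _ _ _ h, not_nbr_of_det _ _ _ h', not_nbr_of_det _ _ _ h'',
    triCross p q, triCross q r, triCross r p, cross_trivAnn _ _ _ h, cross_trivAnn _ _ _ h',
    cross_trivAnn _ _ _ h'', cross_incid_left _ _, cross_incid_right _ _, cross_incid_left _ _,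
    cross_incid_right _ _, cross_incid_left _ _, cross_incid_right _ _, cross_not_nbr _ _ _ h,
    cross_not_nbr _ _ _ h', cross_not_nbr _ _ _ h''⟩

lemma exists_socle {V : Type} [CommRing V] [IsArtinianRing V] (u : V) (hu : ¬ IsUnit u) :
    ∃ (I : Ideal V) (t : V), I.IsMaximal ∧ t ≠ 0 ∧ u ∈ I ∧ ∀ v, v ∈ I ↔ v * t = 0 := by
  obtain ⟨I, hI, huI⟩ := exists_max_ideal_of_mem_nonunits hu
  have hass : I ∈ associatedPrimes V V := by
    apply Module.associatedPrimes.minimalPrimes_annihilator_subset_associatedPrimes V V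
    have h0 : Module.annihilator V V = ⊥ := Module.annihilator_eq_bot.mpr inferInstance
    rw [h0]
    refine ⟨⟨hI.isPrime, bot_le⟩, fun J hJ hJI => ?_⟩
    haveI := hJ.1
    have hJm : J.IsMaximal := inferInstance
    exact (hJm.eq_of_le hI.ne_top hJI).ge
  obtain ⟨hp, t, ht⟩ := isAssociatedPrime_iff.1 hass
  have ht' : ∀ v, v ∈ I ↔ v * t = 0 := by
    intro v
    rw [ht]
    simp [Submodule.mem_colon_singleton]
  refine ⟨I, t, hI, ?_, huI, ht'⟩
  rintro rfl
  exact hI.ne_top ((Ideal.eq_top_iff_one _).2 ((ht' 1).2 (mul_zero _)))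

lemma field_nbr {F : Type} [Field F] (p q : F × F × F) (h : triCross p q = 0) : Nbr p q := by
  simp only [triCross, Prod.mk_eq_zero] at h
  obtain ⟨h1, h2, h3⟩ := h
  by_cases hp1 : p.1 = 0
  · by_cases hp2 : p.2.1 = 0
    · by_cases hp3 : p.2.2 = 0
      · exact ⟨1, 0, by simp, by simp [hp1, hp2, hp3]⟩
      · refine ⟨q.2.2, p.2.2, by simp [hp3], ?_⟩
        simp only [Prod.mk.injEq]
        exact ⟨by linear_combination -h2, by linear_combination h1, by ring⟩
    · refine ⟨q.2.1, p.2.1, by simp [hp2], ?_⟩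
      simp only [Prod.mk.injEq]
      exact ⟨by linear_combination h3, by ring, by linear_combination -h1⟩
  · refine ⟨q.1, p.1, by simp [hp1], ?_⟩
    simp only [Prod.mk.injEq]
    exact ⟨by ring, by linear_combination -h3, by linear_combination h2⟩

lemma cross_zero_trans {F : Type} [Field F] (c l m : F × F × F) (hc : c ≠ 0)
    (h : triCross c l = 0) (h' : triCross c m = 0) : triCross l m = 0 := by
  obtain ⟨c1, c2, c3⟩ := c
  simp only [triCross, Prod.mk_eq_zero, ne_eq] at *
  obtain ⟨h1, h2, h3⟩ := h
  obtain ⟨k1, k2, k3⟩ := h'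
  by_cases hc1 : c1 = 0
  · by_cases hc2 : c2 = 0
    · have hc3 : c3 ≠ 0 := fun h => hc ⟨hc1, hc2, h⟩
      subst hc1 hc2
      have e1 : l.1 = 0 := by simpa [hc3] using h2
      have e2 : l.2.1 = 0 := by simpa [hc3] using h1
      have e3 : m.1 = 0 := by simpa [hc3] using k2
      have e4 : m.2.1 = 0 := by simpa [hc3] using k1
      simp [e1, e2, e3, e4]
    · subst hc1
      refine ⟨mul_left_cancel₀ hc2 ?_, mul_left_cancel₀ hc2 ?_, mul_left_cancel₀ hc2 ?_⟩ <;> grind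
  · refine ⟨mul_left_cancel₀ hc1 ?_, mul_left_cancel₀ hc1 ?_, mul_left_cancel₀ hc1 ?_⟩ <;> grind

lemma triCross_triCross {V : Type} [CommRing V] (p q l : V × V × V) (h : Incid p l) (h' : Incid q l) :
    triCross (triCross p q) l = 0 := by
  simp only [triCross, Incid, Prod.mk_eq_zero] at *
  refine ⟨?_, ?_, ?_⟩
  · linear_combination q.1 * h - p.1 * h'
  · linear_combination q.2.1 * h - p.2.1 * h'
  · linear_combination q.2.2 * h - p.2.2 * h'

lemma field_false {F : Type} [Field F] (p q r l m : F × F × F)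
    (hpq : ¬ Nbr p q) (hqr : ¬ Nbr q r) (hlm : ¬ Nbr l m)
    (h1 : Incid p l) (h2 : Incid q l) (h3 : Incid q m) (h4 : Incid r m)
    (hd : triDet p q r = 0) : False := by
  have hc : triCross p q ≠ 0 := fun h => hpq (field_nbr _ _ h)
  have hc' : triCross q r ≠ 0 := fun h => hqr (field_nbr _ _ h)
  apply hlm
  apply field_nbr
  refine cross_zero_trans _ _ _ hc' (triCross_triCross _ _ _ h2 ?_) (triCross_triCross _ _ _ h3 h4)
  have hcl := triCross_triCross p q l h1 h2
  have hcr : Incid r (triCross p q) := by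
    simp only [Incid, triCross, triDet] at *
    linear_combination hd
  generalize triCross p q = c at *
  obtain ⟨c1, c2, c3⟩ := c
  simp only [triCross, Prod.mk_eq_zero, ne_eq, Incid] at *
  obtain ⟨k1, k2, k3⟩ := hcl
  by_cases hc1 : c1 = 0
  · by_cases hc2 : c2 = 0
    · have hc3 : c3 ≠ 0 := fun h => hc ⟨hc1, hc2, h⟩
      refine mul_left_cancel₀ hc3 ?_
      linear_combination r.1 * k2 - r.2.1 * k1 + l.2.2 * hcr
    · refine mul_left_cancel₀ hc2 ?_
      linear_combination r.2.2 * k1 - r.1 * k3 + l.2.1 * hcr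
  · refine mul_left_cancel₀ hc1 ?_
    linear_combination r.2.1 * k3 - r.2.2 * k2 + l.1 * hcr

/-- Entrywise reduction modulo an ideal. -/
def triMk {V : Type} [CommRing V] (I : Ideal V) (p : V × V × V) : (V ⧸ I) × (V ⧸ I) × (V ⧸ I) :=
  (Ideal.Quotient.mk I p.1, Ideal.Quotient.mk I p.2.1, Ideal.Quotient.mk I p.2.2)

lemma nbr_of_mk {V : Type} [CommRing V] (I : Ideal V) (t : V) (ht : ∀ v, v ∈ I ↔ v * t = 0)
    (p q : V × V × V) (h : Nbr (triMk I p) (triMk I q)) : Nbr p q := by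
  obtain ⟨k, l, hkl, he⟩ := h
  obtain ⟨k, rfl⟩ := Ideal.Quotient.mk_surjective k
  obtain ⟨l, rfl⟩ := Ideal.Quotient.mk_surjective l
  simp only [triMk, Prod.mk.injEq, ← map_mul, Ideal.Quotient.eq, ht] at he
  obtain ⟨h1, h2, h3⟩ := he
  refine ⟨k * t, l * t, ?_, ?_⟩
  · intro h
    apply hkl
    simpa only [Prod.mk.injEq, Ideal.Quotient.eq_zero_iff_mem, ht] using h
  · simp only [Prod.mk.injEq]
    exact ⟨by linear_combination h1, by linear_combination h2, by linear_combination h3⟩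

lemma incid_mk {V : Type} [CommRing V] (I : Ideal V) (p l : V × V × V) (h : Incid p l) :
    Incid (triMk I p) (triMk I l) := by
  simp only [Incid, triMk, ← map_mul, ← map_add] at *
  rw [h, map_zero]

lemma det_of_properTri {V : Type} [CommRing V] [IsArtinianRing V] (p q r : V × V × V)
    (h : ProperTri p q r) : IsUnit (triDet p q r) := by
  by_contra hu
  obtain ⟨I, t, hI, -, huI, ht⟩ := exists_socle _ hu
  obtain ⟨hpq, hqr, -, l, m, -, -, -, -, h1, h2, h3, h4, -, -, hlm, -, -⟩ := h
  letI := Ideal.Quotient.field I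
  refine field_false (triMk I p) (triMk I q) (triMk I r) (triMk I l) (triMk I m)
    (fun h => hpq (nbr_of_mk I t ht _ _ h)) (fun h => hqr (nbr_of_mk I t ht _ _ h))
    (fun h => hlm (nbr_of_mk I t ht _ _ h)) (incid_mk _ _ _ h1) (incid_mk _ _ _ h2)
    (incid_mk _ _ _ h3) (incid_mk _ _ _ h4) ?_
  rw [← Ideal.Quotient.eq_zero_iff_mem] at huI
  simpa [triDet, triMk] using huI

/-- Four points `Pᵢ = V*(xᵢ,yᵢ,zᵢ)` form a proper ordered quadrangle iff
the determinant of the 3×3 matrix with rows `(x₁,y₁,z₁)`, `(x₂,y₂,z₂)`, `(x₃,y₃,z₃)` is a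
unit and `(x₄,y₄,z₄)` is a combination of the first three rows with unit coefficients. -/
theorem stmt10 (K : Type) [Field K] (V : Type) [CommRing V] [Algebra K V] (r s : V)
    (hV : GoodAlg K V r s)
    (x₁ y₁ z₁ x₂ y₂ z₂ x₃ y₃ z₃ x₄ y₄ z₄ : V)
    (hP₁ : TrivAnn (x₁, y₁, z₁)) (hP₂ : TrivAnn (x₂, y₂, z₂))
    (hP₃ : TrivAnn (x₃, y₃, z₃)) (hP₄ : TrivAnn (x₄, y₄, z₄)) :
    ProperQuad (x₁, y₁, z₁) (x₂, y₂, z₂) (x₃, y₃, z₃) (x₄, y₄, z₄) ↔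
      IsUnit (Matrix.det !![x₁, y₁, z₁; x₂, y₂, z₂; x₃, y₃, z₃]) ∧
      ∃ a₁ a₂ a₃ : V, IsUnit a₁ ∧ IsUnit a₂ ∧ IsUnit a₃ ∧
        x₄ = a₁ * x₁ + a₂ * x₂ + a₃ * x₃ ∧
        y₄ = a₁ * y₁ + a₂ * y₂ + a₃ * y₃ ∧
        z₄ = a₁ * z₁ + a₂ * z₂ + a₃ * z₃ := by
  have hfin : Module.Finite K V := Module.finite_of_finrank_pos (by rw [hV.1]; norm_num)
  haveI : IsArtinianRing V := IsArtinianRing.of_finite K V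
  have hdet : Matrix.det !![x₁, y₁, z₁; x₂, y₂, z₂; x₃, y₃, z₃]
      = triDet (x₁, y₁, z₁) (x₂, y₂, z₂) (x₃, y₃, z₃) := by
    simp only [Matrix.det_fin_three, triDet, Matrix.of_apply, Matrix.cons_val]
    ring
  rw [hdet]
  constructor
  · intro h
    have d1 := det_of_properTri _ _ _ (h 0 1 2 (by decide) (by decide) (by decide))
    have d2 := det_of_properTri _ _ _ (h 3 1 2 (by decide) (by decide) (by decide))
    have d3 := det_of_properTri _ _ _ (h 0 3 2 (by decide) (by decide) (by decide))
    have d4 := det_of_properTri _ _ _ (h 0 1 3 (by decide) (by decide) (by decide))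
    simp only [Matrix.cons_val] at d1 d2 d3 d4
    refine ⟨d1, ?_⟩
    obtain ⟨e, he⟩ := d1.exists_right_inv
    have hue : IsUnit e := IsUnit.of_mul_eq_one_right _ he
    refine ⟨_, _, _, hue.mul d2, hue.mul d3, hue.mul d4, ?_, ?_, ?_⟩ <;>
      simp only [triDet] at he ⊢
    · linear_combination -x₄ * he
    · linear_combination -y₄ * he
    · linear_combination -z₄ * he
  · rintro ⟨d, a₁, a₂, a₃, h1, h2, h3, rfl, rfl, rfl⟩ i j k hij hik hjk
    apply properTri_of_det
    have e1 := h1.mul d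
    have e2 := h2.mul d
    have e3 := h3.mul d
    have n0 := d.neg
    have n1 := e1.neg
    have n2 := e2.neg
    have n3 := e3.neg
    clear hdet hP₁ hP₂ hP₃ hP₄ hV
    fin_cases i <;> fin_cases j <;> first | exact absurd rfl hij | skip
    all_goals fin_cases k <;> first | exact absurd rfl hik | exact absurd rfl hjk | skip
    all_goals
      simp only [triDet, Fin.zero_eta, Fin.mk_one, Fin.reduceFinMk, Matrix.cons_val] at *
      first
      | (refine (congrArg IsUnit ?_).mp d; ring1)
      | (refine (congrArg IsUnit ?_).mp n0; ring1)
      | (refine (congrArg IsUnit ?_).mp e1; ring1)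
      | (refine (congrArg IsUnit ?_).mp n1; ring1)
      | (refine (congrArg IsUnit ?_).mp e2; ring1)
      | (refine (congrArg IsUnit ?_).mp n2; ring1)
      | (refine (congrArg IsUnit ?_).mp e3; ring1)
      | (refine (congrArg IsUnit ?_).mp n3; ring1)
end

section
/- The group GL₃(V) acts transitively on each of the following families: (i) flags of 𝒢(V) (incident point-line pairs); (ii) triples (P₁,L₁,P₂) where P₁,P₂ are non-neighboring points incident with the line L₁; (iii) quadruples (P₁,L₁,P₂,L₂) where P₁,P₂ are non-neighboring points incident with L₁ and L₁,L₂ are non-neighboring lines through P₂; (iv) proper ordered triangles. -/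
/-- The action of a 3×3 matrix on (representatives of) points: row vector times matrix. -/
def actP {V : Type} [CommRing V] (M : Matrix (Fin 3) (Fin 3) V) (p : V × V × V) : V × V × V :=
  (Matrix.vecMul ![p.1, p.2.1, p.2.2] M 0,
   Matrix.vecMul ![p.1, p.2.1, p.2.2] M 1,
   Matrix.vecMul ![p.1, p.2.1, p.2.2] M 2)

/-- The corresponding action on (representatives of) lines: `(a,b,c) ↦ (a,b,c)·(M⁻¹)ᵗ`. -/
noncomputable def actL {V : Type} [CommRing V] (M : Matrix (Fin 3) (Fin 3) V) (L : V × V × V) : V × V × V :=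
  actP (M⁻¹).transpose L


namespace Aux14

variable {V : Type} [CommRing V]

/-- coordinates of a triple as a vector -/
def vec (p : V × V × V) : Fin 3 → V := ![p.1, p.2.1, p.2.2]

/-- dot product -/
def dt (p q : V × V × V) : V := p.1 * q.1 + p.2.1 * q.2.1 + p.2.2 * q.2.2

/-- cross product -/
def cr (p q : V × V × V) : V × V × V :=
  (p.2.1 * q.2.2 - p.2.2 * q.2.1, p.2.2 * q.1 - p.1 * q.2.2, p.1 * q.2.1 - p.2.1 * q.1)

/-- matrix with given rows -/
def mat (p q r : V × V × V) : Matrix (Fin 3) (Fin 3) V := Matrix.of ![vec p, vec q, vec r]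

/-- every triple with trivial annihilator is unimodular -/
def UM (V : Type) [CommRing V] : Prop :=
  ∀ p : V × V × V, TrivAnn p → ∃ a : V × V × V, dt a p = 1

theorem good_um (K : Type) [Field K] [Algebra K V] (r s : V) (hV : GoodAlg K V r s) : UM V := by
  intro p hp
  have hfr := hV.1
  have : FiniteDimensional K V := FiniteDimensional.of_finrank_pos (by omega)
  by_contra hcon
  let I : Ideal V := Ideal.span {p.1, p.2.1, p.2.2}
  have hI : I ≠ ⊤ := by
    intro h
    have h1 : (1 : V) ∈ I := by rw [h]; trivial
    obtain ⟨a, b, c, h1⟩ := Submodule.mem_span_triple.1 h1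
    exact hcon ⟨(a, b, c), h1⟩
  let W : Submodule K V := I.restrictScalars K
  have hW : W ≠ ⊤ := by
    intro h
    apply hI
    rw [Ideal.eq_top_iff_one]
    have : (1 : V) ∈ W := by rw [h]; trivial
    exact this
  have hlt := Submodule.finrank_lt hW
  have hle : Module.finrank K W ≤ 1 := by omega
  obtain ⟨t, ht⟩ := finrank_le_one_iff.1 hle
  have htI : (t : V) ∈ I := t.2
  have hinj : ¬ Function.Injective (LinearMap.mulLeft K (t : V)) := by
    intro h
    obtain ⟨w, hw⟩ := LinearMap.injective_iff_surjective.1 h 1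
    apply hI
    rw [Ideal.eq_top_iff_one, ← hw]
    exact I.mul_mem_right w htI
  rw [← LinearMap.ker_eq_bot, LinearMap.ker_eq_bot'] at hinj
  push Not at hinj
  obtain ⟨v, hv, hv0⟩ := hinj
  have hv' : (t : V) * v = 0 := hv
  have key : ∀ w ∈ I, v * w = 0 := by
    intro w hw
    obtain ⟨c, hc⟩ := ht ⟨w, hw⟩
    have : c • (t : V) = w := congrArg Subtype.val hc
    rw [← this, mul_smul_comm, mul_comm, hv', smul_zero]
  exact hv0 (hp v (key _ (Ideal.subset_span (by simp))) (key _ (Ideal.subset_span (by simp)))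
    (key _ (Ideal.subset_span (by simp))))

theorem unit_of (h : UM V) (a : V) (ha : ∀ k, k * a = 0 → k = 0) : IsUnit a := by
  obtain ⟨b, hb⟩ := h (a, 0, 0) (fun v hv _ _ => ha v hv)
  refine IsUnit.of_mul_eq_one b.1 ?_
  simp only [dt] at hb
  linear_combination hb

theorem triv_cr (h : UM V) (p q : V × V × V) (hp : TrivAnn p) (hn : ¬ Nbr p q) :
    TrivAnn (cr p q) := by
  intro k h1 h2 h3
  obtain ⟨a, ha⟩ := h p hp
  by_contra hk
  apply hn
  refine ⟨k * dt a q, k, fun h => hk (Prod.ext_iff.1 h).2, ?_⟩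
  simp only [cr, dt] at *
  refine Prod.ext ?_ (Prod.ext ?_ ?_) <;> simp only
  · linear_combination (k * q.1) * ha + a.2.1 * h3 - a.2.2 * h2
  · linear_combination (k * q.2.1) * ha - a.1 * h3 + a.2.2 * h1
  · linear_combination (k * q.2.2) * ha + a.1 * h2 - a.2.1 * h1

theorem det_mat (p q r : V × V × V) : (mat p q r).det = dt (cr p q) r := by
  simp [mat, vec, Matrix.det_fin_three, dt, cr]
  ring

theorem zero_of (p q r x : V × V × V) (hd : IsUnit (dt (cr p q) r))
    (h1 : dt x p = 0) (h2 : dt x q = 0) (h3 : dt x r = 0) : x.1 = 0 ∧ x.2.1 = 0 ∧ x.2.2 = 0 := by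
  refine ⟨hd.mul_right_eq_zero.1 ?_, hd.mul_right_eq_zero.1 ?_, hd.mul_right_eq_zero.1 ?_⟩
  · have : dt (cr p q) r * x.1 =
      dt x p * (cr q r).1 + dt x q * (cr r p).1 + dt x r * (cr p q).1 := by
      simp only [dt, cr]; ring
    rw [this, h1, h2, h3]; ring
  · have : dt (cr p q) r * x.2.1 =
      dt x p * (cr q r).2.1 + dt x q * (cr r p).2.1 + dt x r * (cr p q).2.1 := by
      simp only [dt, cr]; ring
    rw [this, h1, h2, h3]; ring
  · have : dt (cr p q) r * x.2.2 =
      dt x p * (cr q r).2.2 + dt x q * (cr r p).2.2 + dt x r * (cr p q).2.2 := by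
      simp only [dt, cr]; ring
    rw [this, h1, h2, h3]; ring

theorem line_unit (h : UM V) (p q r L : V × V × V) (hd : IsUnit (dt (cr p q) r)) (hL : TrivAnn L)
    (h1 : dt L p = 0) (h2 : dt L q = 0) : IsUnit (dt L r) := by
  refine unit_of h _ fun k hk => ?_
  have := zero_of p q r (k * L.1, k * L.2.1, k * L.2.2) hd
    (by simp only [dt] at *; linear_combination k * h1)
    (by simp only [dt] at *; linear_combination k * h2)
    (by simp only [dt] at *; linear_combination hk)
  exact hL k this.1 this.2.1 this.2.2

theorem third (h : UM V) (p q : V × V × V) (hp : TrivAnn p) (hn : ¬ Nbr p q) :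
    ∃ r, IsUnit (dt (cr p q) r) := by
  obtain ⟨a, ha⟩ := h _ (triv_cr h p q hp hn)
  refine ⟨a, ?_⟩
  have : dt (cr p q) a = 1 := by rw [← ha]; simp only [dt]; ring
  rw [this]; exact isUnit_one

theorem line2_unit (h : UM V) (p q r L M : V × V × V) (hd : IsUnit (dt (cr p q) r))
    (hL : TrivAnn L) (h1 : dt L p = 0) (h2 : dt L q = 0) (h3 : dt M q = 0) (hn : ¬ Nbr L M) :
    IsUnit (dt M p) := by
  have hu := line_unit h p q r L hd hL h1 h2
  refine unit_of h _ fun k hk => ?_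
  by_contra hk0
  apply hn
  refine ⟨k * dt M r, k * dt L r, fun h => hk0 (hu.mul_left_eq_zero.1 (Prod.ext_iff.1 h).2), ?_⟩
  have := zero_of p q r (k * dt M r * L.1 - k * dt L r * M.1,
    k * dt M r * L.2.1 - k * dt L r * M.2.1, k * dt M r * L.2.2 - k * dt L r * M.2.2) hd
    (by simp only [dt] at *; linear_combination (k * (M.1 * r.1 + M.2.1 * r.2.1 + M.2.2 * r.2.2)) * h1 - (L.1 * r.1 + L.2.1 * r.2.1 + L.2.2 * r.2.2) * hk)
    (by simp only [dt] at *; linear_combination (k * (M.1 * r.1 + M.2.1 * r.2.1 + M.2.2 * r.2.2)) * h2 - (k * (L.1 * r.1 + L.2.1 * r.2.1 + L.2.2 * r.2.2)) * h3)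
    (by simp only [dt]; ring)
  exact Prod.ext (sub_eq_zero.1 this.1) (Prod.ext (sub_eq_zero.1 this.2.1) (sub_eq_zero.1 this.2.2))

theorem nf1 (h : UM V) (p L : V × V × V) (hp : TrivAnn p) (hL : TrivAnn L) (hi : dt L p = 0) :
    ∃ q r, IsUnit (dt (cr p q) r) ∧ dt L q = 0 := by
  obtain ⟨a, ha⟩ := h p hp
  obtain ⟨b, hb⟩ := h L hL
  refine ⟨cr L a, b, ?_, by simp only [dt, cr]; ring⟩
  have : dt (cr p (cr L a)) b = 1 := by
    have e : dt (cr p (cr L a)) b = dt a p * dt b L - dt L p * dt a b := by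
      simp only [dt, cr]; ring
    rw [e, ha, hb, hi]; ring
  rw [this]; exact isUnit_one

theorem nf3 (h : UM V) (p q L M : V × V × V) (hp : TrivAnn p) (hn : ¬ Nbr p q)
    (hL : TrivAnn L) (h1 : dt L p = 0) (h2 : dt L q = 0) (h3 : dt M q = 0) (hnL : ¬ Nbr L M) :
    ∃ r, IsUnit (dt (cr p q) r) ∧ dt M r = 0 := by
  obtain ⟨r, hr⟩ := third h p q hp hn
  obtain ⟨u, hu⟩ := line2_unit h p q r L M hr hL h1 h2 h3 hnL
  have hi : dt M p * (↑u⁻¹ : V) = 1 := by rw [← hu]; simp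
  generalize (↑u⁻¹ : V) = w at hi
  refine ⟨(r.1 - w * dt M r * p.1, r.2.1 - w * dt M r * p.2.1, r.2.2 - w * dt M r * p.2.2), ?_, ?_⟩
  · convert hr using 1
    simp only [dt, cr]; ring
  · have e : dt M (r.1 - w * dt M r * p.1, r.2.1 - w * dt M r * p.2.1, r.2.2 - w * dt M r * p.2.2)
      = dt M r - dt M p * w * dt M r := by simp only [dt]; ring
    rw [e, hi]; ring

theorem nf4 (h : UM V) (p q r : V × V × V) (hp : TrivAnn p) (hq : TrivAnn q)
    (ht : ProperTri p q r) : IsUnit (dt (cr p q) r) := by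
  obtain ⟨n1, n2, -, L, M, -, hL, -, -, i1, i2, i3, i4, -, -, m1, -, -⟩ := ht
  obtain ⟨a, ha⟩ := third h p q hp n1
  have hu := line2_unit h p q a L M ha hL i1 i2 i3 m1
  obtain ⟨b, hb⟩ := h _ (triv_cr h q r hq n2)
  have hb' : dt (cr q r) b = 1 := by rw [← hb]; simp only [dt]; ring
  have i3' : dt M q = 0 := i3
  have i4' : dt M r = 0 := i4
  have hz := zero_of q r b (M.1 - dt M b * (cr q r).1, M.2.1 - dt M b * (cr q r).2.1,
    M.2.2 - dt M b * (cr q r).2.2) (by rw [hb']; exact isUnit_one)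
    (by
      refine Eq.trans ?_ i3'
      simp only [dt, cr]; ring)
    (by
      refine Eq.trans ?_ i4'
      simp only [dt, cr]; ring)
    (by
      have : dt (M.1 - dt M b * (cr q r).1, M.2.1 - dt M b * (cr q r).2.1,
        M.2.2 - dt M b * (cr q r).2.2) b = dt M b - dt M b * dt (cr q r) b := by
        simp only [dt]; ring
      rw [this, hb']; ring)
  obtain ⟨z1, z2, z3⟩ := hz
  have e : dt M p = dt M b * dt (cr p q) r := by
    have e1 : dt (cr p q) r = dt (cr q r) p := by simp only [dt, cr]; ring
    rw [e1]
    generalize dt M b = c at *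
    generalize cr q r = x at *
    simp only [dt] at *
    linear_combination p.1 * z1 + p.2.1 * z2 + p.2.2 * z3
  rw [e] at hu
  exact isUnit_of_mul_isUnit_right hu

theorem actP_vec (M : Matrix (Fin 3) (Fin 3) V) (p q : V × V × V)
    (h : Matrix.vecMul (vec p) M = vec q) : actP M p = q := by
  have e : ∀ i, Matrix.vecMul ![p.1, p.2.1, p.2.2] M i = vec q i := fun i => congrFun h i
  simp only [actP, e]
  rfl

theorem pt (N N' : Matrix (Fin 3) (Fin 3) V) (hN : IsUnit N.det) (i : Fin 3) (p p' : V × V × V)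
    (h : vec p = N i) (h' : vec p' = N' i) : SameCls (actP (N⁻¹ * N') p) p' := by
  have e : actP (N⁻¹ * N') p = p' := by
    apply actP_vec
    have h1 : vec p = Matrix.vecMul (Pi.single i 1) N := by
      rw [Matrix.single_one_vecMul, h]; rfl
    rw [h1, ← Matrix.vecMul_vecMul, Matrix.vecMul_vecMul _ N, Matrix.mul_nonsing_inv _ hN,
      Matrix.vecMul_one, Matrix.single_one_vecMul, h']; rfl
  exact ⟨1, isUnit_one, by rw [e]; simp⟩

theorem ln (N N' : Matrix (Fin 3) (Fin 3) V) (hN : IsUnit N.det) (hN' : IsUnit N'.det) (j : Fin 3)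
    (L L' : V × V × V) (u u' : V) (hu : IsUnit u) (hu' : IsUnit u')
    (h : Matrix.vecMul (vec L) N.transpose = Pi.single j u)
    (h' : Matrix.vecMul (vec L') N'.transpose = Pi.single j u') :
    SameCls (actL (N⁻¹ * N') L) L' := by
  obtain ⟨w, rfl⟩ := hu
  refine ⟨u' * ↑w⁻¹, hu'.mul (Units.isUnit _), ?_⟩
  have h2 : (N⁻¹ * N')⁻¹ = N'⁻¹ * N := by
    rw [Matrix.mul_inv_rev, Matrix.nonsing_inv_nonsing_inv _ hN]
  have h1 : Matrix.vecMul (vec L) ((N⁻¹ * N')⁻¹).transpose =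
      Matrix.vecMul (Pi.single j (w : V)) (N'⁻¹).transpose := by
    rw [h2, Matrix.transpose_mul, ← Matrix.vecMul_vecMul, h]
  have h3 : vec L' = Matrix.vecMul (Pi.single j u') (N'⁻¹).transpose := by
    rw [← h', Matrix.vecMul_vecMul, ← Matrix.transpose_mul, Matrix.nonsing_inv_mul _ hN']
    simp
  have h4 : ∀ i, u' * ↑w⁻¹ * Matrix.vecMul (vec L) ((N⁻¹ * N')⁻¹).transpose i = vec L' i := by
    intro i
    rw [h1, h3]
    simp only [Matrix.single_vecMul, Pi.smul_apply, smul_eq_mul]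
    have : (↑w⁻¹ : V) * w = 1 := by simp
    linear_combination (u' * (N'⁻¹).transpose.row j i) * this
  exact Prod.ext (h4 0) (Prod.ext (h4 1) (h4 2))

theorem vm (p q r L : V × V × V) :
    Matrix.vecMul (vec L) (mat p q r).transpose = ![dt L p, dt L q, dt L r] := by
  funext i
  fin_cases i <;> simp [mat, vec, dt, Matrix.vecMul, dotProduct, Fin.sum_univ_three]

theorem vm2 (p q r L : V × V × V) (h1 : dt L p = 0) (h2 : dt L q = 0) :
    Matrix.vecMul (vec L) (mat p q r).transpose = Pi.single 2 (dt L r) := by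
  rw [vm, h1, h2]
  funext i
  fin_cases i <;> simp

theorem vm0 (p q r L : V × V × V) (h1 : dt L q = 0) (h2 : dt L r = 0) :
    Matrix.vecMul (vec L) (mat p q r).transpose = Pi.single 0 (dt L p) := by
  rw [vm, h1, h2]
  funext i
  fin_cases i <;> simp

theorem mdet (p q r p' q' r' : V × V × V) (hd : IsUnit (dt (cr p q) r))
    (hd' : IsUnit (dt (cr p' q') r')) : IsUnit ((mat p q r)⁻¹ * mat p' q' r').det := by
  rw [Matrix.det_mul]
  rw [← det_mat] at hd hd'
  exact (Matrix.isUnit_nonsing_inv_det _ hd).mul hd'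

theorem master (h : UM V) (p q r p' q' r' : V × V × V) (hd : IsUnit (dt (cr p q) r))
    (hd' : IsUnit (dt (cr p' q') r')) :
    SameCls (actP ((mat p q r)⁻¹ * mat p' q' r') p) p' ∧
    SameCls (actP ((mat p q r)⁻¹ * mat p' q' r') q) q' ∧
    SameCls (actP ((mat p q r)⁻¹ * mat p' q' r') r) r' ∧
    ∀ L L', TrivAnn L → TrivAnn L' → dt L p = 0 → dt L q = 0 → dt L' p' = 0 → dt L' q' = 0 →
      SameCls (actL ((mat p q r)⁻¹ * mat p' q' r') L) L' := by
  have e := hd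
  have e' := hd'
  rw [← det_mat] at e e'
  refine ⟨pt _ _ e 0 _ _ rfl rfl, pt _ _ e 1 _ _ rfl rfl, pt _ _ e 2 _ _ rfl rfl, ?_⟩
  intro L L' hL hL' h1 h2 h1' h2'
  exact ln _ _ e e' 2 L L' _ _ (line_unit h p q r L hd hL h1 h2)
    (line_unit h p' q' r' L' hd' hL' h1' h2') (vm2 _ _ _ _ h1 h2) (vm2 _ _ _ _ h1' h2')

end Aux14

open Aux14

/-- `GL₃(V)` acts transitively on: (i) flags; (ii) triples `(P₁,L₁,P₂)`
with `P₁,P₂` non-neighboring points on `L₁`; (iii) quadruples `(P₁,L₁,P₂,L₂)` with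
additionally `L₁,L₂` non-neighboring lines through `P₂`; (iv) proper ordered triangles. -/
theorem stmt14 (K : Type) [Field K] (V : Type) [CommRing V] [Algebra K V] (r s : V)
    (hV : GoodAlg K V r s) :
    (∀ P₁ L₁ P₁' L₁' : V × V × V,
      TrivAnn P₁ → TrivAnn L₁ → Incid P₁ L₁ →
      TrivAnn P₁' → TrivAnn L₁' → Incid P₁' L₁' →
      ∃ M : Matrix (Fin 3) (Fin 3) V, IsUnit M.det ∧
        SameCls (actP M P₁) P₁' ∧ SameCls (actL M L₁) L₁') ∧
    (∀ P₁ L₁ P₂ P₁' L₁' P₂' : V × V × V,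
      TrivAnn P₁ → TrivAnn L₁ → TrivAnn P₂ → Incid P₁ L₁ → Incid P₂ L₁ → ¬ Nbr P₁ P₂ →
      TrivAnn P₁' → TrivAnn L₁' → TrivAnn P₂' → Incid P₁' L₁' → Incid P₂' L₁' →
        ¬ Nbr P₁' P₂' →
      ∃ M : Matrix (Fin 3) (Fin 3) V, IsUnit M.det ∧
        SameCls (actP M P₁) P₁' ∧ SameCls (actL M L₁) L₁' ∧ SameCls (actP M P₂) P₂') ∧
    (∀ P₁ L₁ P₂ L₂ P₁' L₁' P₂' L₂' : V × V × V,
      TrivAnn P₁ → TrivAnn L₁ → TrivAnn P₂ → TrivAnn L₂ →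
      Incid P₁ L₁ → Incid P₂ L₁ → ¬ Nbr P₁ P₂ → Incid P₂ L₂ → ¬ Nbr L₁ L₂ →
      TrivAnn P₁' → TrivAnn L₁' → TrivAnn P₂' → TrivAnn L₂' →
      Incid P₁' L₁' → Incid P₂' L₁' → ¬ Nbr P₁' P₂' → Incid P₂' L₂' → ¬ Nbr L₁' L₂' →
      ∃ M : Matrix (Fin 3) (Fin 3) V, IsUnit M.det ∧
        SameCls (actP M P₁) P₁' ∧ SameCls (actL M L₁) L₁' ∧
        SameCls (actP M P₂) P₂' ∧ SameCls (actL M L₂) L₂') ∧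
    (∀ P₁ P₂ P₃ P₁' P₂' P₃' : V × V × V,
      TrivAnn P₁ → TrivAnn P₂ → TrivAnn P₃ → ProperTri P₁ P₂ P₃ →
      TrivAnn P₁' → TrivAnn P₂' → TrivAnn P₃' → ProperTri P₁' P₂' P₃' →
      ∃ M : Matrix (Fin 3) (Fin 3) V, IsUnit M.det ∧
        SameCls (actP M P₁) P₁' ∧ SameCls (actP M P₂) P₂' ∧ SameCls (actP M P₃) P₃') := by
  have h := good_um K r s hV
  refine ⟨?_, ?_, ?_, ?_⟩
  · intro P L P' L' hP hL hi hP' hL' hi'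
    obtain ⟨q, r, hd, hq⟩ := nf1 h P L hP hL hi
    obtain ⟨q', r', hd', hq'⟩ := nf1 h P' L' hP' hL' hi'
    obtain ⟨a, -, -, b⟩ := master h _ _ _ _ _ _ hd hd'
    exact ⟨_, mdet _ _ _ _ _ _ hd hd', a, b L L' hL hL' hi hq hi' hq'⟩
  · intro P L Q P' L' Q' hP hL hQ hi hj hn hP' hL' hQ' hi' hj' hn'
    obtain ⟨r, hd⟩ := third h P Q hP hn
    obtain ⟨r', hd'⟩ := third h P' Q' hP' hn'
    obtain ⟨a, c, -, b⟩ := master h _ _ _ _ _ _ hd hd'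
    exact ⟨_, mdet _ _ _ _ _ _ hd hd', a, b L L' hL hL' hi hj hi' hj', c⟩
  · intro P L Q M P' L' Q' M' hP hL hQ hM hi hj hn hk hm hP' hL' hQ' hM' hi' hj' hn' hk' hm'
    obtain ⟨r, hd, hr⟩ := nf3 h P Q L M hP hn hL hi hj hk hm
    obtain ⟨r', hd', hr'⟩ := nf3 h P' Q' L' M' hP' hn' hL' hi' hj' hk' hm'
    obtain ⟨a, c, -, b⟩ := master h _ _ _ _ _ _ hd hd'
    refine ⟨_, mdet _ _ _ _ _ _ hd hd', a, b L L' hL hL' hi hj hi' hj', c, ?_⟩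
    have u := line2_unit h P Q r L M hd hL hi hj hk hm
    have u' := line2_unit h P' Q' r' L' M' hd' hL' hi' hj' hk' hm'
    rw [← det_mat] at hd hd'
    exact ln _ _ hd hd' 0 M M' _ _ u u' (vm0 _ _ _ _ hk hr) (vm0 _ _ _ _ hk' hr')
  · intro P Q R P' Q' R' hP hQ hR ht hP' hQ' hR' ht'
    have hd := nf4 h P Q R hP hQ ht
    have hd' := nf4 h P' Q' R' hP' hQ' ht'
    obtain ⟨a, b, c, -⟩ := master h _ _ _ _ _ _ hd hd'
    exact ⟨_, mdet _ _ _ _ _ _ hd hd', a, b, c⟩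
end

section
/- Let K be a field, t,n ∈ K, and let V = {x·𝔯 + y·𝔦 : x,y ∈ K} ⊆ M₂(K), where 𝔯 is the 2×2 identity matrix and 𝔦 = [[0,1],[−n,t]]. For a triple (M,N,L) ∈ V³ with trivial annihilator in V (P·M = P·N = P·L = 0 with P ∈ V implies P = 0), let H(M,N,L) ∈ M₃(V) be the 3×3 matrix over V whose (i,j) entry is Pᵢ·(Pⱼ)ᵃᵈʲ, where (P₁,P₂,P₃) = (M,N,L) and Xᵃᵈʲ denotes the adjugate of the 2×2 matrix X. Then the K-linear span of the set of all matrices H(M,N,L), inside the 18-dimensional K-vector space M₃(V), has dimension exactly 9. -/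
/-- `A` belongs to the 2-dimensional matrix algebra `V = {x·𝔯 + y·𝔦}` inside `M₂(K)`,
where `𝔯` is the identity matrix and `𝔦 = [[0,1],[−n,t]]`. -/
def InV {K : Type} [Field K] (t n : K) (A : Matrix (Fin 2) (Fin 2) K) : Prop :=
  ∃ x y : K, A = x • (1 : Matrix (Fin 2) (Fin 2) K) + y • !![0, 1; -n, t]

/-- The Hermitian 3×3 matrix `H(M,N,L)` over `V` with `(i,j)` entry `Pᵢ·(Pⱼ)ᵃᵈʲ`, where
`(P₁,P₂,P₃) = (M,N,L)`. -/
def Hmat {K : Type} [Field K] (M N L : Matrix (Fin 2) (Fin 2) K) :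
    Matrix (Fin 3) (Fin 3) (Matrix (Fin 2) (Fin 2) K) :=
  Matrix.of fun i j => (![M, N, L] i) * (![M, N, L] j).adjugate

/-- The element `x·𝔯 + y·𝔦`. -/
def vel {K : Type} [Field K] (t n x y : K) : Matrix (Fin 2) (Fin 2) K :=
  !![x, y; -n * y, x + t * y]

theorem vel_eq {K : Type} [Field K] (t n x y : K) :
    x • (1 : Matrix (Fin 2) (Fin 2) K) + y • !![0, 1; -n, t] = vel t n x y := by
  ext i j
  fin_cases i <;> fin_cases j <;> simp [vel, mul_comm]

theorem vel_add {K : Type} [Field K] (t n x y z w : K) :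
    vel t n x y + vel t n z w = vel t n (x + z) (y + w) := by
  ext i j
  fin_cases i <;> fin_cases j <;> simp [vel] <;> ring

theorem vel_smul {K : Type} [Field K] (t n a x y : K) :
    a • vel t n x y = vel t n (a * x) (a * y) := by
  ext i j
  fin_cases i <;> fin_cases j <;> simp [vel] <;> ring

theorem vel_mul_adj {K : Type} [Field K] (t n x u y v : K) :
    vel t n x u * (vel t n y v).adjugate
      = vel t n (x * y + t * x * v + n * u * v) (u * y - x * v) := by
  ext i j
  fin_cases i <;> fin_cases j <;>
    simp [vel, Matrix.adjugate_fin_two, Matrix.mul_apply, Fin.sum_univ_two] <;> ring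

/-- Parametrization of Hermitian matrices over `V`. -/
def herm {K : Type} [Field K] (t n : K) :
    (Fin 9 → K) →ₗ[K] Matrix (Fin 3) (Fin 3) (Matrix (Fin 2) (Fin 2) K) where
  toFun c := !![vel t n (c 0) 0, vel t n (c 3) (c 4), vel t n (c 5) (c 6);
    vel t n (c 3 + t * c 4) (-c 4), vel t n (c 1) 0, vel t n (c 7) (c 8);
    vel t n (c 5 + t * c 6) (-c 6), vel t n (c 7 + t * c 8) (-c 8), vel t n (c 2) 0]
  map_add' c d := by
    refine Matrix.ext fun i j => ?_
    fin_cases i <;> fin_cases j <;> simp [vel_add] <;> congr 1 <;> ring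
  map_smul' a c := by
    refine Matrix.ext fun i j => ?_
    fin_cases i <;> fin_cases j <;> simp [vel_smul] <;> congr 1 <;> ring

theorem herm_inj {K : Type} [Field K] (t n : K) : Function.Injective (herm t n) := by
  intro c d h
  have e : ∀ i j k l, herm t n c i j k l = herm t n d i j k l := fun i j k l => by rw [h]
  have h0 : c 0 = d 0 := e 0 0 0 0
  have h1 : c 1 = d 1 := e 1 1 0 0
  have h2 : c 2 = d 2 := e 2 2 0 0
  have h3 : c 3 = d 3 := e 0 1 0 0
  have h4 : c 4 = d 4 := e 0 1 0 1
  have h5 : c 5 = d 5 := e 0 2 0 0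
  have h6 : c 6 = d 6 := e 0 2 0 1
  have h7 : c 7 = d 7 := e 1 2 0 0
  have h8 : c 8 = d 8 := e 1 2 0 1
  ext i
  fin_cases i <;> assumption

theorem Hmat_eq {K : Type} [Field K] (t n x y z u v w : K) :
    Hmat (vel t n x u) (vel t n y v) (vel t n z w) = herm t n
      ![x * x + t * x * u + n * u * u, y * y + t * y * v + n * v * v,
        z * z + t * z * w + n * w * w,
        x * y + t * x * v + n * u * v, u * y - x * v,
        x * z + t * x * w + n * u * w, u * z - x * w,
        y * z + t * y * w + n * v * w, v * z - y * w] := by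
  refine Matrix.ext fun i j => ?_
  fin_cases i <;> fin_cases j <;> simp [Hmat, herm, vel_mul_adj] <;> congr 1 <;> ring

theorem vel_one {K : Type} [Field K] (t n : K) : vel t n 1 0 = 1 := by
  rw [← vel_eq]; simp

/-- The `K`-linear span of the matrices `H(M,N,L)`, for `(M,N,L) ∈ V³`
with trivial annihilator in `V`, has dimension exactly `9` over `K`. -/
theorem stmt15 (K : Type) [Field K] (t n : K) :
    Module.finrank K
      ↥(Submodule.span K
        {H : Matrix (Fin 3) (Fin 3) (Matrix (Fin 2) (Fin 2) K) |
          ∃ M N L : Matrix (Fin 2) (Fin 2) K,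
            InV t n M ∧ InV t n N ∧ InV t n L ∧
            (∀ P : Matrix (Fin 2) (Fin 2) K, InV t n P →
              P * M = 0 → P * N = 0 → P * L = 0 → P = 0) ∧
            H = Hmat M N L}) = 9 := by
  set S := {H : Matrix (Fin 3) (Fin 3) (Matrix (Fin 2) (Fin 2) K) |
          ∃ M N L : Matrix (Fin 2) (Fin 2) K,
            InV t n M ∧ InV t n N ∧ InV t n L ∧
            (∀ P : Matrix (Fin 2) (Fin 2) K, InV t n P →
              P * M = 0 → P * N = 0 → P * L = 0 → P = 0) ∧
            H = Hmat M N L} with hS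
  have key : Submodule.span K S = LinearMap.range (herm t n) := by
    apply le_antisymm
    · rw [Submodule.span_le]
      rintro _ ⟨_, _, _, ⟨x, u, rfl⟩, ⟨y, v, rfl⟩, ⟨z, w, rfl⟩, -, rfl⟩
      simp only [vel_eq, Hmat_eq]
      exact ⟨_, rfl⟩
    · have mem : ∀ x y z u v w : K, ((x = 1 ∧ u = 0) ∨ (y = 1 ∧ v = 0) ∨ (z = 1 ∧ w = 0)) →
          Hmat (vel t n x u) (vel t n y v) (vel t n z w) ∈ Submodule.span K S := by
        intro x y z u v w h
        apply Submodule.subset_span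
        refine ⟨_, _, _, ⟨x, u, (vel_eq ..).symm⟩, ⟨y, v, (vel_eq ..).symm⟩,
          ⟨z, w, (vel_eq ..).symm⟩, ?_, rfl⟩
        intro P _ h1 h2 h3
        rcases h with ⟨rfl, rfl⟩ | ⟨rfl, rfl⟩ | ⟨rfl, rfl⟩
        · simpa [vel_one] using h1
        · simpa [vel_one] using h2
        · simpa [vel_one] using h3
      have m0 := mem 1 0 0 0 0 0 (by simp)
      have m1 := mem 0 1 0 0 0 0 (by simp)
      have m2 := mem 0 0 1 0 0 0 (by simp)
      have m3 := mem 1 1 0 0 0 0 (by simp)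
      have m4 := mem 0 1 0 1 0 0 (by simp)
      have m5 := mem 1 0 1 0 0 0 (by simp)
      have m6 := mem 0 0 1 1 0 0 (by simp)
      have m7 := mem 0 1 1 0 0 0 (by simp)
      have m8 := mem 0 0 1 0 1 0 (by simp)
      rw [Hmat_eq, ← Submodule.mem_comap] at m0 m1 m2 m3 m4 m5 m6 m7 m8
      rintro _ ⟨c, rfl⟩
      rw [← Submodule.mem_comap]
      generalize Submodule.comap (herm t n) (Submodule.span K S) = W at *
      have hc := W.add_mem (W.add_mem (W.add_mem (W.add_mem (W.add_mem (W.add_mem (W.add_mem (W.add_mem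
        (W.smul_mem (c 0 - c 3 - n * c 4 - c 5 - n * c 6) m0)
        (W.smul_mem (c 1 - c 3 - c 4 - c 7 - n * c 8) m1))
        (W.smul_mem (c 2 - c 5 - c 6 - c 7 - c 8) m2))
        (W.smul_mem (c 3) m3)) (W.smul_mem (c 4) m4)) (W.smul_mem (c 5) m5))
        (W.smul_mem (c 6) m6)) (W.smul_mem (c 7) m7)) (W.smul_mem (c 8) m8)
      convert hc using 1
      ext i
      fin_cases i <;> simp <;> ring
  rw [key, LinearMap.finrank_range_of_inj (herm_inj t n)]
  simp
end
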